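/- arXiv:2210.07662 — 3 statements merged into one kernel-verified Lean document; each statement's English description precedes it below -/
import Mathlib

section
/- With the aligned setup of the context, given any skew-symmetric real matrix (ω_{ij})_{1≤i,j≤s−1}, there is a unique alternating bilinear form ω on p := p_1 ⊕ … ⊕ p_s ⊕ φ_1(k) ⊕ … ⊕ φ_{s−1}(k) such that ω(X, ·) = 0 for all X ∈ p_1 ⊕ … ⊕ p_s and ω(φ_i(Z), φ_j(W)) = ω_{ij}·g_b(Z,W) for all Z,W ∈ k and 1 ≤ i,j ≤ s−1; moreover this ω is ad(k)-invariant, i.e. ω([U,X],Y) + ω(X,[U,Y]) = 0 for all U ∈ k and X,Y ∈ p. -/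
/-!
Write `B_i(X, Y) = κ_{g_i}(X_i, Y_i)`. The heart of the argument is that alignment forces all the
forms `c_i B_i` to agree on `k`. On a simple ideal `k_j` the projection `π_i` is injective, so
`λ_j c_i B_i` is the Killing form of `k_j` for every `i` (`killingForm_simple_image`); on the center
the claim is the condition on `⟨·,·⟩_0`; and distinct summands of `k` are `B_i`-orthogonal, because
they commute and simple algebras are perfect (`invariant_eq_zero_of_commute`).

Consequently `g_b(φ_i Z, φ_j W)` is, for `Z, W ∈ k`, a fixed multiple of `g_b(Z, W)`. The multiple is
`0` for `i ≠ j` by the choice of the constants `A_j` (`sum_phiCoeff_of_lt`) and positive for `i = j`.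
Moreover `p_1 ⊕ … ⊕ p_s` is `g_b`-orthogonal to every `φ_j(k)`. So the suitably scaled `g_b`-adjoints
`ψ_j` of the `φ_j`, with values in `k`, satisfy `ψ_j ∘ φ_i = δ_{ij}` on `k` and kill
`p_1 ⊕ … ⊕ p_s`, and `ω(X, Y) = ∑ ω_{ij} g_b(ψ_i X, ψ_j Y)` has the prescribed values
(`exists_invariant_form`). Each `φ_j`, hence each `ψ_j`, commutes with `ad(k)`, which gives the
invariance of `ω`. Uniqueness holds because the prescribed values determine `ω` on a spanning set.
-/

open scoped BigOperators

section AlignedForm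

variable {L : Type} [LieRing L] [LieAlgebra ℝ L]

/-- The Killing form of an ideal, here given as a subalgebra stable under all brackets, is the
restriction of the Killing form of the ambient algebra. -/
lemma killingForm_ideal [FiniteDimensional ℝ L] (K : LieSubalgebra ℝ L) (hK : ∀ X Y : L, Y ∈ K → ⁅X, Y⁆ ∈ K)
    (a b : K) : killingForm ℝ K a b = killingForm ℝ L a b := by
  obtain ⟨I, rfl⟩ := (LieSubalgebra.exists_lieIdeal_coe_eq_iff (K := K)).2 hK
  exact LinearMap.congr_fun₂ (LieIdeal.killingForm_eq ℝ L I) a b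

/-- A Lie homomorphism with nonzero image is injective on a simple subalgebra, hence carries its
Killing form to that of the image. -/
lemma killingForm_simple_image (k₁ P : LieSubalgebra ℝ L) [hs : LieAlgebra.IsSimple ℝ k₁]
    (π : L →ₗ[ℝ] L) (hπ : ∀ X Y, π ⁅X, Y⁆ = ⁅π X, π Y⁆)
    (hP : (P : Set L) = π '' (k₁ : Set L)) (hPne : P ≠ ⊥)
    (Z W : k₁) (hZ : π Z ∈ P) (hW : π W ∈ P) :
    killingForm ℝ P ⟨π Z, hZ⟩ ⟨π W, hW⟩ = killingForm ℝ k₁ Z W := by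
  have hmem : ∀ X : k₁, π X ∈ P := fun X => by
    rw [← SetLike.mem_coe, hP]; exact ⟨X, X.2, rfl⟩
  let f : k₁ →ₗ⁅ℝ⁆ P :=
    { toFun := fun X => ⟨π X, hmem X⟩
      map_add' := fun X Y => by ext; simp
      map_smul' := fun r X => by ext; simp
      map_lie' := fun {X Y} => by ext; simp [hπ] }
  have hsurj : Function.Surjective f := by
    rintro ⟨y, hy⟩
    rw [← SetLike.mem_coe, hP] at hy
    obtain ⟨x, hx, rfl⟩ := hy
    exact ⟨⟨x, hx⟩, rfl⟩
  have hinj : Function.Injective f := by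
    rcases hs.eq_bot_or_eq_top f.ker with h | h
    · exact (LieHom.ker_eq_bot f).1 h
    · exfalso
      apply hPne
      rw [eq_bot_iff]
      intro y hy
      obtain ⟨x, hx⟩ := hsurj ⟨y, hy⟩
      have h0 : f x = 0 := by
        rw [← LieHom.mem_ker, h]; exact LieSubmodule.mem_top x
      rw [h0] at hx
      have : y = 0 := (congrArg Subtype.val hx).symm
      simp [this]
  exact LieAlgebra.killingForm_of_equiv_apply (LieEquiv.ofBijective f ⟨hinj, hsurj⟩) Z W

/-- A simple subalgebra is perfect, so it is orthogonal to its centralizer for every invariant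
form. -/
lemma invariant_eq_zero_of_commute (k₁ : LieSubalgebra ℝ L) [hs : LieAlgebra.IsSimple ℝ k₁]
    (B : LinearMap.BilinForm ℝ L) (hB : ∀ U X Y : L, B ⁅U, X⁆ Y = -B X ⁅U, Y⁆)
    (W : L) (hW : ∀ Z ∈ k₁, ⁅Z, W⁆ = 0) (Z : L) (hZ : Z ∈ k₁) : B Z W = 0 := by
  have htop : ⁅(⊤ : LieIdeal ℝ k₁), (⊤ : LieIdeal ℝ k₁)⁆ = ⊤ := by
    rcases hs.eq_bot_or_eq_top ⁅(⊤ : LieIdeal ℝ k₁), (⊤ : LieIdeal ℝ k₁)⁆ with h | h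
    · refine absurd ⟨fun x y => ?_⟩ hs.non_abelian
      have hxy := LieSubmodule.lie_mem_lie (LieSubmodule.mem_top (R := ℝ) (L := k₁) x)
        (LieSubmodule.mem_top (R := ℝ) (L := k₁) y)
      rwa [h, LieSubmodule.mem_bot] at hxy
    · exact h
  have hm : (⟨Z, hZ⟩ : k₁) ∈ (⁅(⊤ : LieIdeal ℝ k₁), (⊤ : LieIdeal ℝ k₁)⁆ : LieIdeal ℝ k₁) := by
    rw [htop]; exact LieSubmodule.mem_top _
  rw [← LieSubmodule.mem_toSubmodule, LieSubmodule.lieIdeal_oper_eq_linear_span] at hm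
  suffices H : ∀ x : k₁, x ∈ Submodule.span ℝ
      {x : k₁ | ∃ (a : (⊤ : LieIdeal ℝ k₁)) (b : (⊤ : LieIdeal ℝ k₁)), ⁅(a : k₁), (b : k₁)⁆ = x} →
      B (x : L) W = 0 from H _ hm
  intro x hx
  induction hx using Submodule.span_induction with
  | mem x h =>
    obtain ⟨a, b, rfl⟩ := h
    simp [hB, hW]
  | zero => simp
  | add x y _ _ h1 h2 => simp [h1, h2]
  | smul r x _ h => simp [h]

/-- A simple subalgebra `k₁` and a subalgebra `k₂` that normalize each other either commute or
satisfy `k₁ ≤ k₂`, since `k₁ ∩ k₂` is an ideal of `k₁` containing their brackets. -/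
lemma commute_or_le (k₁ k₂ : LieSubalgebra ℝ L) [hs : LieAlgebra.IsSimple ℝ k₁]
    (h₁ : ∀ X ∈ k₂, ∀ Y ∈ k₁, ⁅X, Y⁆ ∈ k₁) (h₂ : ∀ X ∈ k₁, ∀ Y ∈ k₂, ⁅X, Y⁆ ∈ k₂) :
    (∀ X ∈ k₁, ∀ Y ∈ k₂, ⁅X, Y⁆ = 0) ∨ k₁ ≤ k₂ := by
  let I : LieIdeal ℝ k₁ :=
    { k₂.toSubmodule.comap k₁.toSubmodule.subtype with
      lie_mem := fun {X Y} hY => h₂ X X.2 Y hY }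
  have hI : ∀ X : k₁, X ∈ I ↔ (X : L) ∈ k₂ := fun X => Iff.rfl
  rcases hs.eq_bot_or_eq_top I with h | h
  · left
    intro X hX Y hY
    have hm : ⁅X, Y⁆ ∈ k₁ := by
      rw [← lie_skew]; exact neg_mem (h₁ Y hY X hX)
    have : (⟨_, hm⟩ : k₁) ∈ I := (hI _).2 (h₂ X hX Y hY)
    rw [h, LieSubmodule.mem_bot] at this
    exact congrArg Subtype.val this
  · right
    intro X hX
    exact (hI ⟨X, hX⟩).1 (h ▸ LieSubmodule.mem_top _)

/-- The invariant form `Ω(X, Y) = ∑ i j, ω_{ij} g_b(ψ_i X, ψ_j Y)`, where `ψ_j : L → k` is the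
rescaled `g_b`-adjoint of `φ_j` restricted to `k`. Since the `φ_j(k)` are mutually orthogonal and
each `φ_j` is a homothety of `k`, the maps `ψ_j` are dual to the `φ_j`. -/
lemma exists_invariant_form [FiniteDimensional ℝ L] {m : ℕ} (gb : LinearMap.BilinForm ℝ L)
    (hsymm : ∀ X Y, gb X Y = gb Y X) (hpos : ∀ X, X ≠ 0 → 0 < gb X X)
    (hinv : ∀ U X Y : L, gb ⁅U, X⁆ Y = -gb X ⁅U, Y⁆)
    (k : LieSubalgebra ℝ L) (φ : Fin m → L →ₗ[ℝ] L)
    (hφ : ∀ j (U X : L), φ j ⁅U, X⁆ = ⁅U, φ j X⁆)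
    (n : Fin m → ℝ) (hn : ∀ j, n j ≠ 0)
    (hφφ : ∀ i j, ∀ Z ∈ k, ∀ W ∈ k,
      gb (φ i Z) (φ j W) = if i = j then n j * gb Z W else 0)
    (ωm : Fin m → Fin m → ℝ) (hωm : ∀ i j, ωm i j = -ωm j i) :
    ∃ Ω : LinearMap.BilinForm ℝ L, (∀ X, Ω X X = 0) ∧
      (∀ X Y, (∀ j, ∀ W ∈ k, gb X (φ j W) = 0) → Ω X Y = 0) ∧
      (∀ i j, ∀ Z ∈ k, ∀ W ∈ k, Ω (φ i Z) (φ j W) = ωm i j * gb Z W) ∧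
      (∀ U ∈ k, ∀ X Y, Ω ⁅U, X⁆ Y + Ω X ⁅U, Y⁆ = 0) := by
  let gk : LinearMap.BilinForm ℝ k := gb.restrict k.toSubmodule
  have hgk : ∀ x y : k, gk x y = gb x y := fun _ _ => rfl
  have hsep : ∀ x : k, (∀ y : k, gk x y = 0) → x = 0 := by
    intro x hx
    by_contra h
    have := hpos x (fun h' => h (Subtype.ext h'))
    rw [← hgk, hx x] at this
    exact lt_irrefl _ this
  have hnd : gk.Nondegenerate := by
    refine ⟨fun x hx => hsep x hx, fun x hx => hsep x fun y => ?_⟩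
    rw [hgk, hsymm]; exact hx y
  let ψ : Fin m → L →ₗ[ℝ] k := fun j =>
    (gk.toDual hnd).symm.toLinearMap ∘ₗ
      ((n j)⁻¹ • (gb.compl₂ (φ j ∘ₗ k.toSubmodule.subtype)))
  have hψ : ∀ j X (W : k), gb (ψ j X) W = (n j)⁻¹ * gb X (φ j W) := by
    intro j X W
    rw [← hgk]
    simp only [ψ, LinearMap.comp_apply, LinearEquiv.coe_coe]
    rw [LinearMap.BilinForm.apply_toDual_symm_apply]
    rfl
  have hψext : ∀ j X (V : k), (∀ W ∈ k, (n j)⁻¹ * gb X (φ j W) = gb V W) → ψ j X = V := by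
    intro j X V h
    rw [← sub_eq_zero]
    refine hsep _ fun y => ?_
    rw [map_sub, LinearMap.sub_apply, hgk, hgk, hψ, h y y.2, sub_self]
  have hψφ : ∀ i j (Z : L) (hZ : Z ∈ k), ψ j (φ i Z) = if i = j then ⟨Z, hZ⟩ else 0 := by
    intro i j Z hZ
    refine hψext _ _ _ fun W hW => ?_
    rw [hφφ i j Z hZ W hW]
    split_ifs with h
    · rw [← mul_assoc, inv_mul_cancel₀ (hn j), one_mul]
    · simp
  have hψlie : ∀ j (U : L) (hU : U ∈ k) X, ψ j ⁅U, X⁆ = ⁅(⟨U, hU⟩ : k), ψ j X⁆ := by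
    intro j U hU X
    refine hψext _ _ _ fun W hW => ?_
    have h1 := hψ j X ⟨⁅U, W⁆, k.lie_mem hU hW⟩
    simp only at h1
    rw [hinv, LieSubalgebra.coe_bracket, hinv, h1, hφ]
    ring
  have hψ0 : ∀ j X, (∀ W ∈ k, gb X (φ j W) = 0) → ψ j X = 0 := by
    intro j X h
    refine hψext _ _ _ fun W hW => ?_
    simp [h W hW]
  let Ω : LinearMap.BilinForm ℝ L := ∑ i, ∑ j, ωm i j • gk.compl₁₂ (ψ i) (ψ j)
  have hΩ : ∀ X Y, Ω X Y = ∑ i, ∑ j, ωm i j * gb (ψ i X) (ψ j Y) := by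
    intro X Y
    simp [Ω, LinearMap.sum_apply, hgk]
  refine ⟨Ω, fun X => ?_, fun X Y h => ?_, fun i j Z hZ W hW => ?_, fun U hU X Y => ?_⟩
  · have h : Ω X X = -Ω X X := by
      conv_lhs => rw [hΩ, Finset.sum_comm]
      rw [hΩ, ← Finset.sum_neg_distrib]
      refine Finset.sum_congr rfl fun i _ => ?_
      rw [← Finset.sum_neg_distrib]
      refine Finset.sum_congr rfl fun j _ => ?_
      rw [hωm j i, hsymm (ψ j X)]; ring
    linarith
  · rw [hΩ]
    refine Finset.sum_eq_zero fun i _ => Finset.sum_eq_zero fun j _ => ?_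
    simp [hψ0 i X (h i)]
  · rw [hΩ, Finset.sum_eq_single i, Finset.sum_eq_single j]
    · simp [hψφ _ _ _ hZ, hψφ _ _ _ hW]
    · intro b _ hb
      simp [hψφ _ _ _ hW, hb.symm]
    · simp
    · intro b _ hb
      simp [hψφ _ _ _ hZ, hb.symm]
    · simp
  · rw [hΩ, hΩ, ← Finset.sum_add_distrib]
    refine Finset.sum_eq_zero fun i _ => ?_
    rw [← Finset.sum_add_distrib]
    refine Finset.sum_eq_zero fun j _ => ?_
    rw [hψlie _ U hU, hψlie _ U hU, LieSubalgebra.coe_bracket, LieSubalgebra.coe_bracket, hinv]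
    ring

end AlignedForm

/-- The coefficient of `Z_l` in `φ_j(Z)`. -/
def phiCoeff {m : ℕ} (A : Fin m → ℝ) (l : Fin (m + 1)) (j : Fin m) : ℝ :=
  (if (l : ℕ) ≤ (j : ℕ) then 1 else 0) + (if l = j.succ then A j else 0)

lemma phiCoeff_eq_one {m : ℕ} (A : Fin m → ℝ) {l : Fin (m + 1)} {j : Fin m}
    (h : (l : ℕ) ≤ j) : phiCoeff A l j = 1 := by
  have : l ≠ j.succ := by
    rintro rfl; simp at h
  simp [phiCoeff, h, this]

lemma phiCoeff_eq_zero {m : ℕ} (A : Fin m → ℝ) {l : Fin (m + 1)} {j : Fin m}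
    (h : (j : ℕ) + 1 < l) : phiCoeff A l j = 0 := by
  have h1 : l ≠ j.succ := by
    rintro rfl; simp at h
  have h2 : ¬ (l : ℕ) ≤ j := by omega
  simp [phiCoeff, h1, h2]

/-- The choice of `A_j` makes `φ_i(k)` and `φ_j(k)` orthogonal: for `i < j` the weights of
`φ_j` are `1` wherever those of `φ_i` do not vanish. -/
lemma sum_phiCoeff_of_lt {m : ℕ} (A : Fin m → ℝ) (c z : Fin (m + 1) → ℝ)
    (hc : ∀ i, 0 < c i) (hz : ∀ i, 0 < z i)
    (hA : ∀ j : Fin m, A j = -(c j.succ / z j.succ)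
      * ∑ l : Fin (m + 1), (if (l : ℕ) ≤ (j : ℕ) then z l / c l else 0))
    {i j : Fin m} (hij : i < j) :
    ∑ l, z l / c l * (phiCoeff A l i * phiCoeff A l j) = 0 := by
  have h : ∀ l, z l / c l * (phiCoeff A l i * phiCoeff A l j)
      = (if (l : ℕ) ≤ (i : ℕ) then z l / c l else 0)
        + (if l = i.succ then z l / c l * A i else 0) := by
    intro l
    by_cases hl : (i : ℕ) + 1 < l
    · have h1 : l ≠ i.succ := by
        rintro rfl; simp at hl
      have h2 : ¬ (l : ℕ) ≤ i := by omega
      simp [phiCoeff_eq_zero A hl, h1, h2]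
    · rw [phiCoeff_eq_one A (j := j) (by have : (i : ℕ) < j := hij; omega)]
      simp only [phiCoeff]
      split_ifs <;> ring
  simp only [h, Finset.sum_add_distrib, Finset.sum_ite_eq', Finset.mem_univ, if_true]
  rw [hA i]
  have := (hc i.succ).ne'
  have := (hz i.succ).ne'
  field_simp
  ring

/-- Aligned setup (`s = m + 1`), with
`p = p_1 ⊕ … ⊕ p_s ⊕ φ_1(k) ⊕ … ⊕ φ_{s-1}(k)` the `g_b`-orthogonal complement of `k`.
Given any skew-symmetric real matrix `(ω_{ij})`, there is a unique alternating bilinear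
form `ω` on `p` with `ω(X,·) = 0` for `X ∈ p_1 ⊕ … ⊕ p_s` and
`ω(φ_i(Z), φ_j(W)) = ω_{ij}·g_b(Z,W)` for `Z, W ∈ k`; moreover `ω` is `ad(k)`-invariant. -/
theorem stmt_12
    {L : Type} [LieRing L] [LieAlgebra ℝ L] [FiniteDimensional ℝ L]
    (hκneg : ∀ X : L, X ≠ 0 → killingForm ℝ L X X < 0)
    {m : ℕ}
    (K : Fin (m + 1) → LieSubalgebra ℝ L)
    (hKideal : ∀ (i : Fin (m + 1)) (X Y : L), Y ∈ K i → ⁅X, Y⁆ ∈ K i)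
    (hKsimple : ∀ i, LieAlgebra.IsSimple ℝ ↥(K i))
    (π : Fin (m + 1) → (L →ₗ[ℝ] L))
    (hπmem : ∀ i X, π i X ∈ K i)
    (hπsum : ∀ X : L, ∑ i, π i X = X)
    (hπid : ∀ i X, X ∈ K i → π i X = X)
    (hπzero : ∀ i j, i ≠ j → ∀ X, X ∈ K i → π j X = 0)
    (k : LieSubalgebra ℝ L) (hk : k ≠ ⊥)
    (k₀ : LieSubalgebra ℝ L)
    (hk₀ : ∀ W : L, W ∈ k₀ ↔ (W ∈ k ∧ ∀ Z ∈ k, ⁅Z, W⁆ = 0))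
    {t : ℕ} (kj : Fin t → LieSubalgebra ℝ L)
    (hkjsub : ∀ j, (kj j : Set L) ⊆ (k : Set L))
    (hkjideal : ∀ (j : Fin t) (Z W : L), Z ∈ k → W ∈ kj j → ⁅Z, W⁆ ∈ kj j)
    (hkjsimple : ∀ j, LieAlgebra.IsSimple ℝ ↥(kj j))
    (hkdecomp : ∀ Z ∈ k, ∃ (Z₀ : L) (f : Fin t → L),
      Z₀ ∈ k₀ ∧ (∀ j, f j ∈ kj j) ∧ Z = Z₀ + ∑ j, f j)
    -- the aligned conditions
    (c : Fin (m + 1) → ℝ) (hcpos : ∀ i, 0 < c i)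
    (lam : Fin t → ℝ) (hlam : ∀ j, 0 < lam j)
    (P : Fin (m + 1) → Fin t → LieSubalgebra ℝ L)
    (hPset : ∀ i j, (P i j : Set L) = (π i) '' (kj j : Set L))
    (hPK : ∀ i j (U : L), U ∈ P i j → U ∈ K i)
    (hPne : ∀ i j, P i j ≠ ⊥)
    (hkilling : ∀ i j (U V : ↥(P i j)),
      killingForm ℝ ↥(P i j) U V
        = (lam j * c i) * killingForm ℝ ↥(K i) ⟨(U : L), hPK i j U U.2⟩ ⟨(V : L), hPK i j V V.2⟩)
    (ip0 : LinearMap.BilinForm ℝ L)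
    (hip0symm : ∀ Z W : L, ip0 Z W = ip0 W Z)
    (hip0pos : ∀ Z ∈ k₀, Z ≠ 0 → 0 < ip0 Z Z)
    (hip0 : ∀ (i : Fin (m + 1)), ∀ Z ∈ k₀, ∀ W ∈ k₀,
      killingForm ℝ ↥(K i) ⟨π i Z, hπmem i Z⟩ ⟨π i W, hπmem i W⟩ = -(1 / c i) * ip0 Z W)
    (hcsum : ∑ i, 1 / c i = 1)
    -- the bi-invariant metric g_b and the maps φ_j
    (z : Fin (m + 1) → ℝ) (hz : ∀ i, 0 < z i)
    (gb : LinearMap.BilinForm ℝ L)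
    (hgb : ∀ X Y : L, gb X Y
      = - ∑ i, z i * killingForm ℝ ↥(K i) ⟨π i X, hπmem i X⟩ ⟨π i Y, hπmem i Y⟩)
    (A : Fin m → ℝ)
    (hA : ∀ j : Fin m, A j = -(c j.succ / z j.succ)
      * ∑ l : Fin (m + 1), (if (l : ℕ) ≤ (j : ℕ) then z l / c l else 0))
    (φ : Fin m → (L →ₗ[ℝ] L))
    (hφ : ∀ (j : Fin m) (Z : L), φ j Z
      = (∑ l : Fin (m + 1), (if (l : ℕ) ≤ (j : ℕ) then π l Z else 0)) + A j • π j.succ Z)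
    -- p = p_1 ⊕ … ⊕ p_s ⊕ φ_1(k) ⊕ … ⊕ φ_{s-1}(k), the g_b-orthogonal complement of k
    (pSub : Submodule ℝ L)
    (hpSub : ∀ X : L, X ∈ pSub ↔
      ∃ (f : Fin (m + 1) → L) (w : Fin m → L),
        (∀ i, ∃ hfi : f i ∈ K i, ∀ Z ∈ k,
          killingForm ℝ ↥(K i) ⟨f i, hfi⟩ ⟨π i Z, hπmem i Z⟩ = 0)
        ∧ (∀ j, w j ∈ k)
        ∧ X = (∑ i, f i) + (∑ j, φ j (w j)))
    (hpSuborth : ∀ X : L, X ∈ pSub ↔ ∀ Z ∈ k, gb X Z = 0)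
    (hφmem : ∀ (j : Fin m) (Z : L), Z ∈ k → φ j Z ∈ pSub)
    (hbr : ∀ (U : L), U ∈ k → ∀ (X : L), X ∈ pSub → ⁅U, X⁆ ∈ pSub)
    -- the given skew-symmetric matrix
    (ωm : Fin m → Fin m → ℝ) (hωm : ∀ i j, ωm i j = - ωm j i) :
    ∃ ω : LinearMap.BilinForm ℝ ↥pSub,
      -- ω is alternating, vanishes on p_1 ⊕ … ⊕ p_s, and takes the prescribed values
      ((∀ X : ↥pSub, ω X X = 0)
        ∧ (∀ X Y : ↥pSub,
            (∃ f : Fin (m + 1) → L,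
              (∀ i, ∃ hfi : f i ∈ K i, ∀ Z ∈ k,
                killingForm ℝ ↥(K i) ⟨f i, hfi⟩ ⟨π i Z, hπmem i Z⟩ = 0)
              ∧ (X : L) = ∑ i, f i) →
            ω X Y = 0)
        ∧ (∀ (i j : Fin m) (Z W : L) (hZ : Z ∈ k) (hW : W ∈ k),
            ω ⟨φ i Z, hφmem i Z hZ⟩ ⟨φ j W, hφmem j W hW⟩ = ωm i j * gb Z W))
      -- moreover ω is ad(k)-invariant
      ∧ (∀ (U : L) (hU : U ∈ k), ∀ X Y : ↥pSub,
          ω ⟨⁅U, (X : L)⁆, hbr U hU X X.2⟩ Y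
            + ω X ⟨⁅U, (Y : L)⁆, hbr U hU Y Y.2⟩ = 0)
      -- and it is unique
      ∧ (∀ ω' : LinearMap.BilinForm ℝ ↥pSub,
          ((∀ X : ↥pSub, ω' X X = 0)
            ∧ (∀ X Y : ↥pSub,
                (∃ f : Fin (m + 1) → L,
                  (∀ i, ∃ hfi : f i ∈ K i, ∀ Z ∈ k,
                    killingForm ℝ ↥(K i) ⟨f i, hfi⟩ ⟨π i Z, hπmem i Z⟩ = 0)
                  ∧ (X : L) = ∑ i, f i) →
                ω' X Y = 0)
            ∧ (∀ (i j : Fin m) (Z W : L) (hZ : Z ∈ k) (hW : W ∈ k),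
                ω' ⟨φ i Z, hφmem i Z hZ⟩ ⟨φ j W, hφmem j W hW⟩ = ωm i j * gb Z W))
          → ω' = ω) := by
  classical
  have hπlie : ∀ i (X Y : L), π i ⁅X, Y⁆ = ⁅X, π i Y⁆ := by
    intro i X Y
    conv_lhs => rw [← hπsum Y, lie_sum, map_sum]
    rw [Finset.sum_eq_single i]
    · exact hπid i _ (hKideal i X _ (hπmem i Y))
    · intro b _ hb
      exact hπzero b i hb _ (hKideal b X _ (hπmem b Y))
    · simp
  have hπlie' : ∀ i (X Y : L), π i ⁅X, Y⁆ = ⁅π i X, Y⁆ := by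
    intro i X Y
    rw [← lie_skew, map_neg, hπlie, lie_skew]
  have hπhom : ∀ i (X Y : L), π i ⁅X, Y⁆ = ⁅π i X, π i Y⁆ := by
    intro i X Y
    rw [← hπlie', ← hπlie, hπid i _ (hπmem i _)]
  -- `B i` is the form `κ_{g_i}(X_i, Y_i)`, written through the Killing form of the whole algebra
  let B : Fin (m + 1) → LinearMap.BilinForm ℝ L := fun i =>
    (killingForm ℝ L).compl₁₂ (π i) (π i)
  have hB : ∀ i X Y, B i X Y = killingForm ℝ L (π i X) (π i Y) := fun _ _ _ => rfl
  have hκB : ∀ i X Y, killingForm ℝ ↥(K i) ⟨π i X, hπmem i X⟩ ⟨π i Y, hπmem i Y⟩ = B i X Y :=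
    fun i X Y => killingForm_ideal (K i) (hKideal i) _ _
  have hBsymm : ∀ i X Y, B i X Y = B i Y X := fun i X Y =>
    LieModule.traceForm_comm ℝ L L _ _
  have hBinv : ∀ i (U X Y : L), B i ⁅U, X⁆ Y = -B i X ⁅U, Y⁆ := by
    intro i U X Y
    rw [hB, hB, hπlie, hπlie]
    exact LieModule.traceForm_apply_lie_apply' ℝ L L _ _ _
  have hBneg : ∀ i X, π i X ≠ 0 → B i X X < 0 := fun i X h => hκneg _ h
  have hBnonpos : ∀ i X, B i X X ≤ 0 := by
    intro i X
    by_cases h : π i X = 0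
    · simp [hB, h]
    · exact (hBneg i X h).le
  simp only [hκB] at hip0 hgb
  -- on a simple ideal `k_j`, the form `lam j * c i * B i` is the Killing form, whatever `i` is
  have hsimple : ∀ i j (Z W : L) (hZ : Z ∈ kj j) (hW : W ∈ kj j),
      lam j * (c i * B i Z W) = killingForm ℝ (kj j) ⟨Z, hZ⟩ ⟨W, hW⟩ := by
    intro i j Z W hZ hW
    have hmem : ∀ X ∈ kj j, π i X ∈ P i j := fun X hX => by
      rw [← SetLike.mem_coe, hPset]; exact ⟨X, hX, rfl⟩
    have := hkjsimple j
    rw [← killingForm_simple_image (kj j) (P i j) (π i) (hπhom i) (hPset i j) (hPne i j)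
      ⟨Z, hZ⟩ ⟨W, hW⟩ (hmem Z hZ) (hmem W hW), hkilling, hκB]
    ring
  have hsame : ∀ i j, ∀ Z ∈ kj j, ∀ W ∈ kj j, c i * B i Z W = c 0 * B 0 Z W := by
    intro i j Z hZ W hW
    have h := (hsimple i j Z W hZ hW).trans (hsimple 0 j Z W hZ hW).symm
    exact mul_left_cancel₀ (hlam j).ne' h
  have hdiff : ∀ i j l, ∀ Z ∈ kj j, ∀ W ∈ kj l, c i * B i Z W = c 0 * B 0 Z W := by
    intro i j l Z hZ W hW
    have := hkjsimple j
    rcases commute_or_le (kj j) (kj l)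
      (fun X hX Y hY => hkjideal j X Y (hkjsub l hX) hY)
      (fun X hX Y hY => hkjideal l X Y (hkjsub j hX) hY) with h | h
    · rw [invariant_eq_zero_of_commute (kj j) (B i) (hBinv i) W (fun Z hZ => h Z hZ W hW) Z hZ,
        invariant_eq_zero_of_commute (kj j) (B 0) (hBinv 0) W (fun Z hZ => h Z hZ W hW) Z hZ]
      simp
    · exact hsame i l Z (h hZ) W hW
  have hcent : ∀ i j, ∀ Z ∈ kj j, ∀ W ∈ k₀, B i Z W = 0 := by
    intro i j Z hZ W hW
    have := hkjsimple j
    exact invariant_eq_zero_of_commute (kj j) (B i) (hBinv i) W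
      (fun Z hZ => ((hk₀ W).1 hW).2 Z (hkjsub j hZ)) Z hZ
  have hzero : ∀ i, ∀ Z ∈ k₀, ∀ W ∈ k₀, c i * B i Z W = c 0 * B 0 Z W := by
    intro i Z hZ W hW
    rw [hip0 i Z hZ W hW, hip0 0 Z hZ W hW]
    have := (hcpos i).ne'
    have := (hcpos 0).ne'
    field_simp
  -- on `k` all the forms `c_i • B i` agree
  have haligned : ∀ i, ∀ Z ∈ k, ∀ W ∈ k, c i * B i Z W = c 0 * B 0 Z W := by
    intro i Z hZ W hW
    obtain ⟨Z₀, f, hZ₀, hf, rfl⟩ := hkdecomp Z hZ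
    obtain ⟨W₀, g, hW₀, hg, rfl⟩ := hkdecomp W hW
    have key : ∀ i, c i * B i (Z₀ + ∑ j, f j) (W₀ + ∑ j, g j)
        = c i * B i Z₀ W₀ + ∑ j, ∑ l, c i * B i (f j) (g l) := by
      intro i
      have h1 : ∀ j, B i (f j) W₀ = 0 := fun j => hcent i j _ (hf j) _ hW₀
      have h2 : ∀ j, B i Z₀ (g j) = 0 := fun j => by
        rw [hBsymm]; exact hcent i j _ (hg j) _ hZ₀
      simp only [map_add, map_sum, LinearMap.add_apply, LinearMap.sum_apply, h1, h2,
        Finset.sum_const_zero, zero_add, add_zero, mul_add, Finset.mul_sum]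
      rw [Finset.sum_comm]
    rw [key i, key 0, hzero i Z₀ hZ₀ W₀ hW₀]
    congr 1
    exact Finset.sum_congr rfl fun j _ => Finset.sum_congr rfl fun l _ =>
      hdiff i j l _ (hf j) _ (hg l)
  have hBk : ∀ i, ∀ Z ∈ k, ∀ W ∈ k, B i Z W = 1 / c i * (c 0 * B 0 Z W) := by
    intro i Z hZ W hW
    rw [← haligned i Z hZ W hW]
    have := (hcpos i).ne'
    field_simp
  have hgsymm : ∀ X Y, gb X Y = gb Y X := by
    intro X Y
    rw [hgb, hgb]
    simp only [fun i => hBsymm i X Y]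
  have hgpos : ∀ X, X ≠ 0 → 0 < gb X X := by
    intro X hX
    have hex : ∃ i, π i X ≠ 0 := by
      by_contra! h
      exact hX (by rw [← hπsum X]; simp [h])
    obtain ⟨i, hi⟩ := hex
    rw [hgb, ← Finset.sum_neg_distrib]
    refine Finset.sum_pos' (fun l _ => ?_) ⟨i, Finset.mem_univ i, ?_⟩
    · nlinarith [hz l, hBnonpos l X]
    · nlinarith [hz i, hBneg i X hi]
  have hginv : ∀ U X Y : L, gb ⁅U, X⁆ Y = -gb X ⁅U, Y⁆ := by
    intro U X Y
    rw [hgb, hgb]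
    simp only [hBinv, mul_neg, Finset.sum_neg_distrib]
  have hφlie : ∀ j (U X : L), φ j ⁅U, X⁆ = ⁅U, φ j X⁆ := by
    intro j U X
    rw [hφ, hφ, lie_add, lie_sum, lie_smul, hπlie]
    congr 1
    refine Finset.sum_congr rfl fun l _ => ?_
    split_ifs
    · exact hπlie _ _ _
    · simp
  have hππ : ∀ i j X, π i (π j X) = if i = j then π j X else 0 := by
    intro i j X
    split_ifs with h
    · subst h; exact hπid _ _ (hπmem _ _)
    · exact hπzero j i (Ne.symm h) _ (hπmem _ _)
  have hπφ : ∀ l j Z, π l (φ j Z) = phiCoeff A l j • π l Z := by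
    intro l j Z
    rw [hφ, map_add, map_sum, map_smul, hππ, phiCoeff, add_smul]
    congr 1
    · rw [Finset.sum_eq_single l]
      · split_ifs
        · rw [hππ]; simp
        · simp
      · intro b _ hb
        split_ifs
        · rw [hππ, if_neg hb.symm]
        · simp
      · simp
    · split_ifs with h
      · rw [h]
      · simp
  have hBφ : ∀ l X j W, B l X (φ j W) = phiCoeff A l j * B l X W := by
    intro l X j W
    rw [hB, hB, hπφ, map_smul, smul_eq_mul]
  have hgφ : ∀ i j, ∀ Z ∈ k, ∀ W ∈ k, gb (φ i Z) (φ j W)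
      = -(∑ l, z l / c l * (phiCoeff A l i * phiCoeff A l j)) * (c 0 * B 0 Z W) := by
    intro i j Z hZ W hW
    rw [hgb, neg_mul, Finset.sum_mul]
    congr 1
    refine Finset.sum_congr rfl fun l _ => ?_
    rw [hBφ, hBsymm, hBφ, hBsymm, hBk l Z hZ W hW]
    ring
  have hgk : ∀ Z ∈ k, ∀ W ∈ k, gb Z W = -(∑ l, z l / c l) * (c 0 * B 0 Z W) := by
    intro Z hZ W hW
    rw [hgb, neg_mul, Finset.sum_mul]
    congr 1
    refine Finset.sum_congr rfl fun l _ => ?_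
    rw [hBk l Z hZ W hW]
    ring
  have hzc : ∀ l, 0 < z l / c l := fun l => div_pos (hz l) (hcpos l)
  have hS : 0 < ∑ l, z l / c l := Finset.sum_pos (fun l _ => hzc l) Finset.univ_nonempty
  have hN : ∀ j, 0 < ∑ l, z l / c l * (phiCoeff A l j * phiCoeff A l j) := by
    intro j
    refine Finset.sum_pos' (fun l _ => mul_nonneg (hzc l).le (mul_self_nonneg _))
      ⟨0, Finset.mem_univ _, ?_⟩
    rw [phiCoeff_eq_one A (by simp)]
    simpa using hzc 0
  obtain ⟨Ω, hΩalt, hΩ0, hΩφ, hΩinv⟩ := exists_invariant_form gb hgsymm hgpos hginv k φ hφlie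
    (fun j => (∑ l, z l / c l * (phiCoeff A l j * phiCoeff A l j)) / ∑ l, z l / c l)
    (fun j => (div_pos (hN j) hS).ne')
    (by
      intro i j Z hZ W hW
      rw [hgφ i j Z hZ W hW]
      split_ifs with h
      · subst h
        rw [hgk Z hZ W hW]
        have := hS.ne'
        field_simp
      · rcases lt_or_gt_of_ne h with h | h
        · rw [sum_phiCoeff_of_lt A c z hcpos hz hA h]; simp
        · simp only [mul_comm (phiCoeff A _ i)]
          rw [sum_phiCoeff_of_lt A c z hcpos hz hA h]; simp)
    ωm hωm
  -- `p_1 ⊕ … ⊕ p_s` is orthogonal to every `φ_j(k)`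
  have horth : ∀ X : L, (∃ f : Fin (m + 1) → L,
      (∀ i, ∃ hfi : f i ∈ K i, ∀ Z ∈ k,
        killingForm ℝ ↥(K i) ⟨f i, hfi⟩ ⟨π i Z, hπmem i Z⟩ = 0) ∧ X = ∑ i, f i) →
      ∀ j, ∀ W ∈ k, gb X (φ j W) = 0 := by
    rintro X ⟨f, hf, rfl⟩ j W hW
    have hπf : ∀ l, π l (∑ i, f i) = f l := by
      intro l
      rw [map_sum, Finset.sum_eq_single l]
      · exact hπid l _ (hf l).1
      · intro b _ hb
        exact hπzero b l hb _ (hf b).1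
      · simp
    rw [hgb, neg_eq_zero]
    refine Finset.sum_eq_zero fun l _ => ?_
    obtain ⟨hl, h⟩ := hf l
    have h0 : B l (∑ i, f i) W = 0 := by
      rw [hB, hπf, ← h W hW]
      exact (killingForm_ideal (K l) (hKideal l) ⟨f l, hl⟩ ⟨π l W, hπmem l W⟩).symm
    rw [hBφ, h0]; simp
  have hΩp : ∀ X Y : L, (∃ f : Fin (m + 1) → L,
      (∀ i, ∃ hfi : f i ∈ K i, ∀ Z ∈ k,
        killingForm ℝ ↥(K i) ⟨f i, hfi⟩ ⟨π i Z, hπmem i Z⟩ = 0) ∧ X = ∑ i, f i) → Ω X Y = 0 :=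
    fun X Y h => hΩ0 X Y (horth X h)
  refine ⟨Ω.restrict pSub, ⟨fun X => hΩalt X, fun X Y h => hΩp X Y h,
    fun i j Z W hZ hW => hΩφ i j Z hZ W hW⟩, fun U hU X Y => hΩinv U hU X Y, ?_⟩
  rintro ω' ⟨halt, hp, hφω⟩
  -- the difference of two solutions vanishes on a spanning set
  let D : LinearMap.BilinForm ℝ ↥pSub := ω' - Ω.restrict pSub
  have hD : ∀ X Y, D X Y = ω' X Y - Ω X Y := fun _ _ => rfl
  have hDalt : ∀ X, D X X = 0 := fun X => by rw [hD, halt, hΩalt, sub_zero]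
  have hDswap : ∀ X Y, D X Y = -D Y X := by
    intro X Y
    have h := hDalt (X + Y)
    simp only [map_add, LinearMap.add_apply, hDalt] at h
    linarith
  have hdec : ∀ X : ↥pSub, ∃ (F : ↥pSub) (w : Fin m → L) (hw : ∀ j, w j ∈ k),
      (∀ Y, D F Y = 0) ∧ X = F + ∑ j, ⟨φ j (w j), hφmem j (w j) (hw j)⟩ := by
    rintro ⟨X, hX⟩
    obtain ⟨f, w, hf, hw, rfl⟩ := (hpSub X).1 hX
    have hF : ∑ i, f i ∈ pSub :=
      (hpSub _).2 ⟨f, fun _ => 0, hf, fun _ => k.zero_mem, by simp⟩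
    refine ⟨⟨_, hF⟩, w, hw, fun Y => ?_, ?_⟩
    · rw [hD, hp _ Y ⟨f, hf, rfl⟩, hΩp _ _ ⟨f, hf, rfl⟩, sub_zero]
    · ext; simp
  rw [← sub_eq_zero]
  change D = 0
  refine LinearMap.ext₂ fun X Y => ?_
  obtain ⟨F, w, hw, hF, rfl⟩ := hdec X
  obtain ⟨G, v, hv, hG, rfl⟩ := hdec Y
  have hG' : ∀ X, D X G = 0 := fun X => by rw [hDswap, hG, neg_zero]
  rw [map_add, hG', zero_add, map_add, LinearMap.add_apply, hF, zero_add,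
    LinearMap.zero_apply, LinearMap.zero_apply, map_sum]
  refine Finset.sum_eq_zero fun j _ => ?_
  rw [map_sum, LinearMap.sum_apply]
  refine Finset.sum_eq_zero fun i _ => ?_
  rw [hD, hφω _ _ _ _ (hw i) (hv j), hΩφ _ _ _ (hw i) _ (hv j), sub_self]
end

section
/- For every bi-invariant symmetric bilinear form Q on g with Q|_{k×k} = 0 and every ad(k)-invariant alternating 2-form ω on p with ω(Y, ·) = 0 for all Y ∈ p̃, one has g(H_Q, dω) = 0, where the inner product on 3-forms is the one induced by g. -/
open scoped BigOperators

/-!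
Write `E_u` for the basis vectors and `S = ∑ H_Q(E_u,E_v,E_r) ω([E_u,E_v]_p,E_r) / (w_u w_v w_r)`.
Since `H_Q` is alternating, the inner product in question is `-3 S`, so `S = 0` is to be shown.

By Schur's lemma `Q = c_i g_b` on each simple ideal `g_i` (`exists_smul_on_simple`), and distinct
ideals are orthogonal for every bi-invariant form (`invariant_form_orthogonal`).  Hence
`Q(k, p_i) = 0`.  As `ω` kills `p̃`, only `E_r` in some `p_i` contributes, and of `H_Q` there remain
the terms `Q([E_u,E_v],E_r)`, `Q([E_v,E_r]_k,E_u)` and its mirror image under `u ↔ v`.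

* If `X = [E_u,E_v]` lies in `g_i`, then
  `∑_r Q(X,E_r) ω(X_p,E_r) / w_r = (c_i/x_i) ω(X_p,X_p) = 0`.  Otherwise `E_u` and `E_v` both lie
  in `p̃`, and then `ω([E_u,E_v]_p, ·) = 0`, because `p̃` normalizes every `p_i`.
* `Q([E_v,E_r]_k,E_u)` vanishes unless `E_u ∈ p̃`.  In that case there is `t ∈ k` with
  `Q(W,E_u) = g_b(W,t)` for `W ∈ k`, and the sum over `v, r` becomes
  `∑_v w_v⁻² ω([E_u,E_v]_p,[t,E_v])`.  Both `E_u` and `t` preserve each `p_i` and act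
  skew-symmetrically, and `ω` is `t`-invariant, so this sum equals its own negative.
-/

/-- A simple subalgebra `A` is orthogonal, for every bi-invariant form, to any ideal `B` commuting
with it: the elements of `A` orthogonal to `B` form an ideal of `A` containing `[A, A] ≠ 0`. -/
lemma invariant_form_orthogonal {L : Type} [LieRing L] [LieAlgebra ℝ L]
    (A B : LieSubalgebra ℝ L) (hB : ∀ X Y : L, Y ∈ B → ⁅X, Y⁆ ∈ B)
    (hsimple : LieAlgebra.IsSimple ℝ A)
    (hAB : ∀ X ∈ A, ∀ Y ∈ B, ⁅X, Y⁆ = 0)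
    (Q : LinearMap.BilinForm ℝ L) (hQinv : ∀ X Y Z : L, Q ⁅X, Y⁆ Z = - Q Y ⁅X, Z⁆) :
    ∀ X ∈ A, ∀ Y ∈ B, Q X Y = 0 := by
  let I : LieIdeal ℝ A :=
    { carrier := {v | ∀ Y ∈ B, Q (v : L) Y = 0}
      add_mem' := by
        intro a b ha hb Y hY
        simp [ha Y hY, hb Y hY]
      zero_mem' := by intro Y _; simp
      smul_mem' := by
        intro c a ha Y hY
        simp [ha Y hY]
      lie_mem := by
        intro a b hb Y hY
        have : Q ⁅(a : L), (b : L)⁆ Y = 0 := by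
          rw [hQinv, hb _ (hB _ _ hY), neg_zero]
        simpa using this }
  have hI : ∀ v : A, v ∈ I ↔ ∀ Y ∈ B, Q (v : L) Y = 0 := fun v => Iff.rfl
  have hbr : ∀ a b : A, ⁅a, b⁆ ∈ I := by
    intro a b
    rw [hI]
    intro Y hY
    rw [LieSubalgebra.coe_bracket, hQinv, hAB _ a.2 _ hY]
    simp
  rcases hsimple.eq_bot_or_eq_top I with h | h
  · exfalso
    apply hsimple.non_abelian
    constructor
    intro a b
    have := hbr a b
    rw [h] at this
    simpa using this
  · intro X hX Y hY
    have : (⟨X, hX⟩ : A) ∈ I := by rw [h]; trivial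
    exact (hI _).1 this Y hY

/-- A symmetric bilinear form on a nonzero finite-dimensional inner product space has an
eigenvector. -/
lemma exists_eigen_inner {V : Type*} [NormedAddCommGroup V] [InnerProductSpace ℝ V]
    [FiniteDimensional ℝ V] [Nontrivial V] (Q : LinearMap.BilinForm ℝ V)
    (hQ : ∀ X Y, Q X Y = Q Y X) :
    ∃ (c : ℝ) (v : V), v ≠ 0 ∧ ∀ Y, Q v Y = c * inner ℝ v Y := by
  let T : V →ₗ[ℝ] V :=
    ((InnerProductSpace.toDual ℝ V).symm.toLinearEquiv.toLinearMap).comp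
      ((LinearMap.toContinuousLinearMap (𝕜 := ℝ) (E := V) (F' := ℝ)).toLinearMap.comp Q)
  have hT : ∀ X Y, inner ℝ (T X) Y = Q X Y := by
    intro X Y
    simp [T]
  have hsym : T.IsSymmetric := by
    intro X Y
    rw [hT, real_inner_comm, hT, hQ]
  obtain ⟨c, v, hv⟩ : ∃ (c : ℝ) (v : V), Module.End.HasEigenvector T c v :=
    ⟨_, hsym.hasEigenvalue_iSup_of_finiteDimensional.exists_hasEigenvector⟩
  refine ⟨c, v, hv.2, fun Y => ?_⟩
  rw [← hT, hv.apply_eq_smul, real_inner_smul_left]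

/-- The same with the inner product given as a positive definite symmetric bilinear form. -/
lemma exists_eigen_form {V : Type*} [AddCommGroup V] [Module ℝ V]
    [FiniteDimensional ℝ V] [Nontrivial V] (G Q : LinearMap.BilinForm ℝ V)
    (hG : ∀ X Y, G X Y = G Y X) (hpos : ∀ X, X ≠ 0 → 0 < G X X)
    (hQ : ∀ X Y, Q X Y = Q Y X) :
    ∃ (c : ℝ) (v : V), v ≠ 0 ∧ ∀ Y, Q v Y = c * G v Y := by
  let core : InnerProductSpace.Core ℝ V :=
    { inner := fun X Y => G X Y
      conj_inner_symm := fun X Y => by simpa using hG Y X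
      re_inner_nonneg := fun X => by
        rcases eq_or_ne X 0 with h | h
        · simp [h]
        · simpa using (hpos X h).le
      add_left := fun X Y Z => by simp
      smul_left := fun X Y c => by simp
      definite := fun X h => by
        by_contra hX
        exact (hpos X hX).ne' h }
  let : NormedAddCommGroup V := core.toNormedAddCommGroup
  let : InnerProductSpace ℝ V := InnerProductSpace.ofCore core.toCore
  exact exists_eigen_inner Q hQ

/-- Schur's lemma: on a simple ideal every bi-invariant symmetric form is a multiple of a given
bi-invariant inner product, because the eigenspaces of the one relative to the other are ideals. -/
lemma exists_smul_on_simple {L : Type} [LieRing L] [LieAlgebra ℝ L] [FiniteDimensional ℝ L]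
    (A : LieSubalgebra ℝ L) (hsimple : LieAlgebra.IsSimple ℝ A)
    (gb Q : LinearMap.BilinForm ℝ L)
    (hgb_symm : ∀ X Y : L, gb X Y = gb Y X)
    (hgb_pos : ∀ X : L, X ≠ 0 → 0 < gb X X)
    (hgb_inv : ∀ X Y Z : L, gb ⁅X, Y⁆ Z = - gb Y ⁅X, Z⁆)
    (hQsymm : ∀ X Y : L, Q X Y = Q Y X)
    (hQinv : ∀ X Y Z : L, Q ⁅X, Y⁆ Z = - Q Y ⁅X, Z⁆) :
    ∃ c : ℝ, ∀ X ∈ A, ∀ Y ∈ A, Q X Y = c * gb X Y := by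
  have : Nontrivial A := by
    by_contra h
    rw [not_nontrivial_iff_subsingleton] at h
    exact hsimple.non_abelian ⟨fun a b => Subsingleton.elim _ _⟩
  obtain ⟨c, v, hv0, hv⟩ := exists_eigen_form
    (gb.restrict A.toSubmodule) (Q.restrict A.toSubmodule)
    (fun X Y => hgb_symm X Y)
    (fun X hX => hgb_pos X (fun h => hX (Subtype.ext h)))
    (fun X Y => hQsymm X Y)
  refine ⟨c, ?_⟩
  let I : LieIdeal ℝ A :=
    { carrier := {v | ∀ Y ∈ A, Q (v : L) Y = c * gb (v : L) Y}
      add_mem' := by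
        intro a b ha hb Y hY
        simp [ha Y hY, hb Y hY, mul_add]
      zero_mem' := by intro Y _; simp
      smul_mem' := by
        intro d a ha Y hY
        simp [ha Y hY]
        ring
      lie_mem := by
        intro a b hb Y hY
        have : Q ⁅(a : L), (b : L)⁆ Y = c * gb ⁅(a : L), (b : L)⁆ Y := by
          rw [hQinv, hgb_inv, hb _ (A.lie_mem a.2 hY)]
          ring
        simpa using this }
  have hI : ∀ v : A, v ∈ I ↔ ∀ Y ∈ A, Q (v : L) Y = c * gb (v : L) Y := fun v => Iff.rfl
  have hvI : v ∈ I := (hI v).2 fun Y hY => hv ⟨Y, hY⟩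
  rcases hsimple.eq_bot_or_eq_top I with h | h
  · rw [h] at hvI
    exact absurd (by simpa using hvI) hv0
  · intro X hX Y hY
    have : (⟨X, hX⟩ : A) ∈ I := by rw [h]; trivial
    exact (hI _).1 this Y hY

/-- `g = g_1 ⊕ … ⊕ g_s` semisimple with negative-definite Killing form,
`k ⊆ g` a subalgebra with `π_i(k) ≠ 0` for all `i`, `g_b` a bi-invariant inner product,
`p` the `g_b`-orthogonal complement of `k`, `p_i = {X ∈ g_i : g_b(X, π_i(k)) = 0}`,
`p̃ = p ∩ (π_1(k) ⊕ … ⊕ π_s(k))`, with a further `g_b`-orthogonal decomposition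
`p̃ = p_{s+1} ⊕ … ⊕ p_r` into `ad(k)`-invariant subspaces, and the metric `g` equal to
`x_i·g_b` on each piece.  For every bi-invariant symmetric `Q` with `Q|_{k×k} = 0` and
every `ad(k)`-invariant alternating 2-form `ω` on `p` with `ω(Y,·) = 0` for all `Y ∈ p̃`,
one has `g(H_Q, dω) = 0` (inner product on 3-forms computed in the adapted
`g_b`-orthonormal basis `Eb`, rescaled by the weights `w`). -/
theorem stmt_15
    {L : Type} [LieRing L] [LieAlgebra ℝ L] [FiniteDimensional ℝ L]
    (hκneg : ∀ X : L, X ≠ 0 → killingForm ℝ L X X < 0)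
    {s : ℕ} (K : Fin s → LieSubalgebra ℝ L)
    (hKideal : ∀ (i : Fin s) (X Y : L), Y ∈ K i → ⁅X, Y⁆ ∈ K i)
    (hKsimple : ∀ i, LieAlgebra.IsSimple ℝ ↥(K i))
    (π : Fin s → (L →ₗ[ℝ] L))
    (hπmem : ∀ i X, π i X ∈ K i)
    (hπsum : ∀ X : L, ∑ i, π i X = X)
    (hπid : ∀ i X, X ∈ K i → π i X = X)
    (hπzero : ∀ i j, i ≠ j → ∀ X, X ∈ K i → π j X = 0)
    (k : LieSubalgebra ℝ L)
    (hkproj : ∀ i, ∃ Z ∈ k, π i Z ≠ 0)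
    (gb : LinearMap.BilinForm ℝ L)
    (hgb_symm : ∀ X Y : L, gb X Y = gb Y X)
    (hgb_pos : ∀ X : L, X ≠ 0 → 0 < gb X X)
    (hgb_inv : ∀ X Y Z : L, gb ⁅X, Y⁆ Z = - gb Y ⁅X, Z⁆)
    -- p : the g_b-orthogonal complement of k
    (p : Submodule ℝ L)
    (hp : ∀ X : L, X ∈ p ↔ ∀ Z ∈ k, gb X Z = 0)
    (hkp : ∀ Z ∈ k, ∀ X ∈ p, ⁅Z, X⁆ ∈ p)
    (prk prp : L →ₗ[ℝ] L)
    (hprk : ∀ X : L, prk X ∈ k) (hprp : ∀ X : L, prp X ∈ p)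
    (hprsum : ∀ X : L, prk X + prp X = X)
    (hprkk : ∀ Z ∈ k, prk Z = Z) (hprpp : ∀ X ∈ p, prp X = X)
    -- the subspaces p_i = {X ∈ g_i : g_b(X, π_i(k)) = 0}, i = 1, …, s
    (P : Fin s → Submodule ℝ L)
    (hP : ∀ (i : Fin s) (X : L), X ∈ P i ↔ (X ∈ K i ∧ ∀ Z ∈ k, gb X (π i Z) = 0))
    -- p̃ = p ∩ (π_1(k) ⊕ … ⊕ π_s(k))
    (ptil : Submodule ℝ L)
    (hptil : ∀ X : L, X ∈ ptil ↔
      (X ∈ p ∧ ∃ u : Fin s → L, (∀ i, u i ∈ k) ∧ X = ∑ i, π i (u i)))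
    -- the decomposition p̃ = p_{s+1} ⊕ … ⊕ p_r into ad(k)-invariant subspaces
    {q : ℕ} (Pt : Fin q → Submodule ℝ L)
    (hPtsub : ∀ l, Pt l ≤ ptil)
    (hPtinv : ∀ (l : Fin q), ∀ Z ∈ k, ∀ X ∈ Pt l, ⁅Z, X⁆ ∈ Pt l)
    (hPtorth : ∀ l l' : Fin q, l ≠ l' → ∀ X ∈ Pt l, ∀ Y ∈ Pt l', gb X Y = 0)
    (hPtspan : ∀ X ∈ ptil, ∃ u : Fin q → L, (∀ l, u l ∈ Pt l) ∧ X = ∑ l, u l)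
    -- p = p_1 ⊕ … ⊕ p_s ⊕ p̃ is g_b-orthogonal and ad(k)-invariant
    (hPsub : ∀ i, P i ≤ p)
    (hPinv : ∀ (i : Fin s), ∀ Z ∈ k, ∀ X ∈ P i, ⁅Z, X⁆ ∈ P i)
    (hPorth : ∀ i i' : Fin s, i ≠ i' → ∀ X ∈ P i, ∀ Y ∈ P i', gb X Y = 0)
    (hPPtorth : ∀ (i : Fin s) (l : Fin q), ∀ X ∈ P i, ∀ Y ∈ Pt l, gb X Y = 0)
    (hPspan : ∀ X ∈ p, ∃ (f : Fin s → L) (Y : L),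
      (∀ i, f i ∈ P i) ∧ Y ∈ ptil ∧ X = (∑ i, f i) + Y)
    -- the invariant metric g = (x_1, …, x_r)_{g_b}, via an adapted orthonormal basis
    (x : Fin s → ℝ) (hx : ∀ i, 0 < x i)
    (xt : Fin q → ℝ) (hxt : ∀ l, 0 < xt l)
    {n : ℕ} (Eb : Fin n → L) (idx : Fin n → (Fin s) ⊕ (Fin q))
    (hEmem : ∀ u : Fin n,
      Sum.elim (fun i => Eb u ∈ P i) (fun l => Eb u ∈ Pt l) (idx u))
    (hEon : ∀ u v : Fin n, gb (Eb u) (Eb v) = if u = v then 1 else 0)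
    (hEspan : ∀ X ∈ p, X ∈ Submodule.span ℝ (Set.range Eb))
    (w : Fin n → ℝ)
    (hw : ∀ u : Fin n, w u = Sum.elim (fun i => x i) (fun l => xt l) (idx u))
    -- Q : bi-invariant, symmetric, vanishing on k × k
    (Q : LinearMap.BilinForm ℝ L)
    (hQsymm : ∀ X Y : L, Q X Y = Q Y X)
    (hQinv : ∀ X Y Z : L, Q ⁅X, Y⁆ Z = - Q Y ⁅X, Z⁆)
    (hQk : ∀ Z ∈ k, ∀ W ∈ k, Q Z W = 0)
    -- the closed 3-form H_Q
    (HQ : L → L → L → ℝ)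
    (hHQ : ∀ X Y Z : L, HQ X Y Z
      = Q ⁅X, Y⁆ Z + Q (prk ⁅X, Y⁆) Z - Q (prk ⁅X, Z⁆) Y + Q (prk ⁅Y, Z⁆) X) :
    ∀ ω : LinearMap.BilinForm ℝ L,
      (∀ X : L, ω X X = 0) →
      (∀ Z ∈ k, ∀ X ∈ p, ∀ Y ∈ p, ω ⁅Z, X⁆ Y + ω X ⁅Z, Y⁆ = 0) →
      (∀ Y ∈ ptil, ∀ X : L, ω Y X = 0) →
      ∑ u : Fin n, ∑ v : Fin n, ∑ r : Fin n,
        HQ (Eb u) (Eb v) (Eb r)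
          * (- ω (prp ⁅Eb u, Eb v⁆) (Eb r) + ω (prp ⁅Eb u, Eb r⁆) (Eb v)
              - ω (prp ⁅Eb v, Eb r⁆) (Eb u))
          / (w u * w v * w r) = 0 := by
  intro ω hωalt hωinv hωtil
  have hωskew : ∀ X Y, ω X Y = - ω Y X := by
    intro X Y
    have h := hωalt (X + Y)
    simp only [map_add, LinearMap.add_apply, hωalt] at h
    linarith
  have hωtil' : ∀ Y ∈ ptil, ∀ X, ω X Y = 0 := by
    intro Y hY X
    rw [hωskew, hωtil Y hY, neg_zero]
  have hQskew : ∀ X Y Z : L, Q ⁅X, Y⁆ Z = - Q ⁅X, Z⁆ Y := by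
    intro X Y Z
    rw [hQinv, hQsymm]
  -- The two kinds of basis vectors.
  have hE : ∀ u, (∃ i, Eb u ∈ P i ∧ w u = x i) ∨ (∃ l, Eb u ∈ Pt l) := by
    intro u
    have h1 := hEmem u
    have h2 := hw u
    rcases hidx : idx u with i | l
    · rw [hidx] at h1 h2
      exact Or.inl ⟨i, h1, h2⟩
    · rw [hidx] at h1
      exact Or.inr ⟨l, h1⟩
  have hPtp : ∀ l, ∀ X ∈ Pt l, X ∈ p := fun l X hX => ((hptil X).1 (hPtsub l hX)).1
  have hEp : ∀ u, Eb u ∈ p := by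
    intro u
    rcases hE u with ⟨i, hi, -⟩ | ⟨l, hl⟩
    · exact hPsub i hi
    · exact hPtp l _ hl
  have hPK : ∀ i, ∀ X ∈ P i, X ∈ K i := fun i X hX => ((hP i X).1 hX).1
  -- Distinct ideals commute and are orthogonal.
  have hKK : ∀ i j, i ≠ j → ∀ X ∈ K i, ∀ Y ∈ K j, ⁅X, Y⁆ = 0 := by
    intro i j hij X hX Y hY
    have h1 : ⁅X, Y⁆ ∈ K j := hKideal j X Y hY
    have h2 : ⁅X, Y⁆ ∈ K i := by
      rw [← lie_skew]
      exact (K i).neg_mem (hKideal i Y X hX)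
    rw [← hπid j _ h1, hπzero i j hij _ h2]
  have hQorth : ∀ i j, i ≠ j → ∀ X ∈ K i, ∀ Y ∈ K j, Q X Y = 0 := fun i j hij =>
    invariant_form_orthogonal (K i) (K j) (hKideal j) (hKsimple i) (hKK i j hij) Q hQinv
  have hgorth : ∀ i j, i ≠ j → ∀ X ∈ K i, ∀ Y ∈ K j, gb X Y = 0 := fun i j hij =>
    invariant_form_orthogonal (K i) (K j) (hKideal j) (hKsimple i) (hKK i j hij) gb hgb_inv
  choose c hc using fun i => exists_smul_on_simple (K i) (hKsimple i) gb Q hgb_symm hgb_pos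
    hgb_inv hQsymm hQinv
  -- `Q` pairs `X` with an element of `g_i` through `c_i` and the `i`-th component of `X`.
  have hQπ : ∀ i X, ∀ Y ∈ K i, Q X Y = c i * gb (π i X) Y := by
    intro i X Y hY
    conv_lhs => rw [← hπsum X]
    rw [map_sum, LinearMap.sum_apply, Finset.sum_eq_single i]
    · exact hc i _ (hπmem i X) _ hY
    · intro j _ hj
      exact hQorth j i hj _ (hπmem j X) _ hY
    · simp
  have hgπ : ∀ i X, ∀ Y ∈ K i, gb X Y = gb (π i X) Y := by
    intro i X Y hY
    conv_lhs => rw [← hπsum X]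
    rw [map_sum, LinearMap.sum_apply, Finset.sum_eq_single i]
    · intro j _ hj
      exact hgorth j i hj _ (hπmem j X) _ hY
    · simp
  have hQkP : ∀ i, ∀ W ∈ k, ∀ X ∈ P i, Q W X = 0 := by
    intro i W hW X hX
    rw [hQπ i W X (hPK i X hX), hgb_symm, ((hP i X).1 hX).2 W hW, mul_zero]
  have hprpE : ∀ X, prp X = ∑ r, gb X (Eb r) • Eb r := by
    have h1 : ∀ X ∈ Submodule.span ℝ (Set.range Eb), X = ∑ r, gb X (Eb r) • Eb r := by
      intro X hX
      induction hX using Submodule.span_induction with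
      | mem X hX =>
        obtain ⟨u, rfl⟩ := hX
        simp [hEon]
      | zero => simp
      | add X Y _ _ hX hY =>
        simp only [map_add, LinearMap.add_apply, add_smul, Finset.sum_add_distrib]
        rw [← hX, ← hY]
      | smul a X _ hX =>
        simp only [map_smul, LinearMap.smul_apply, smul_assoc, ← Finset.smul_sum]
        rw [← hX]
    intro X
    conv_lhs => rw [h1 _ (hEspan _ (hprp X))]
    refine Finset.sum_congr rfl fun r _ => ?_
    congr 1
    conv_rhs => rw [← hprsum X]
    rw [map_add, LinearMap.add_apply, hgb_symm (prk X), (hp _).1 (hEp r) _ (hprk X), zero_add]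
  have hωr : ∀ X Z, ω Z (prp X) = ∑ r, gb X (Eb r) * ω Z (Eb r) := by
    intro X Z
    rw [hprpE, map_sum]
    simp
  have hωl : ∀ X Z, ω (prp X) Z = ∑ r, gb X (Eb r) * ω (Eb r) Z := by
    intro X Z
    rw [hprpE, map_sum, LinearMap.sum_apply]
    simp
  -- `p̃` normalizes each `p_i`.
  have hnorm : ∀ u ∈ ptil, ∀ i, ∀ X ∈ P i, ⁅u, X⁆ ∈ P i := by
    intro u hu i X hX
    obtain ⟨-, f, hf, rfl⟩ := (hptil u).1 hu
    have hbr : ∀ W : L, ⁅π i W, X⁆ = ⁅W, X⁆ := by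
      intro W
      conv_rhs => rw [← hπsum W]
      rw [sum_lie, Finset.sum_eq_single i]
      · intro j _ hj
        exact hKK j i hj _ (hπmem j W) _ (hPK i X hX)
      · simp
    rw [sum_lie, Finset.sum_eq_single i, hbr]
    · exact hPinv i _ (hf i) X hX
    · intro j _ hj
      exact hKK j i hj _ (hπmem j _) _ (hPK i X hX)
    · simp
  -- An element normalizing every `p_i` acts block-diagonally as far as `ω` can see.
  have hblock : ∀ y : L, (∀ i, ∀ X ∈ P i, ⁅y, X⁆ ∈ P i) → ∀ v r : Fin n,
      (gb ⁅y, Eb v⁆ (Eb r) = 0 ∨ Eb r ∈ ptil) ∨ w v = w r := by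
    intro y hy v r
    rcases hE r with ⟨i, hi, hwi⟩ | ⟨l, hl⟩
    · have h0 := hy i _ hi
      rcases hE v with ⟨j, hj, hwj⟩ | ⟨l, hl⟩
      · by_cases hij : j = i
        · subst hij
          right
          rw [hwi, hwj]
        · left; left
          rw [hgb_inv, hPorth j i hij _ hj _ h0, neg_zero]
      · left; left
        rw [hgb_inv, hgb_symm, hPPtorth i l _ h0 _ hl, neg_zero]
    · left; right
      exact hPtsub l hl
  have hωtt : ∀ u ∈ ptil, ∀ l, ∀ v ∈ Pt l, ∀ Z, ω (prp ⁅u, v⁆) Z = 0 := by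
    intro u hu l v hv Z
    rw [hωl]
    refine Finset.sum_eq_zero fun r _ => ?_
    rcases hE r with ⟨i, hi, -⟩ | ⟨l', hl'⟩
    · rw [hgb_inv, hgb_symm, hPPtorth i l _ (hnorm u hu i _ hi) _ hv, neg_zero, zero_mul]
    · rw [hωtil _ (hPtsub _ hl'), mul_zero]
  have hT1K : ∀ i, ∀ X ∈ K i, ∑ r, Q X (Eb r) * ω (prp X) (Eb r) / w r = 0 := by
    intro i X hX
    have h1 : ∀ r, Q X (Eb r) * ω (prp X) (Eb r) / w r
        = c i / x i * (gb X (Eb r) * ω (prp X) (Eb r)) := by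
      intro r
      rcases hE r with ⟨j, hj, hwj⟩ | ⟨l, hl⟩
      · by_cases hij : i = j
        · subst hij
          rw [hc i X hX _ (hPK i _ hj), hwj]
          ring
        · rw [hQorth i j hij X hX _ (hPK j _ hj), hgorth i j hij X hX _ (hPK j _ hj)]
          simp
      · rw [hωtil' _ (hPtsub l hl)]
        simp
    rw [Finset.sum_congr rfl fun r _ => h1 r, ← Finset.mul_sum, ← hωr, hωalt, mul_zero]
  have hT1 : ∀ u v, ∑ r, Q ⁅Eb u, Eb v⁆ (Eb r) * ω (prp ⁅Eb u, Eb v⁆) (Eb r) / w r = 0 := by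
    intro u v
    rcases hE v with ⟨i, hi, -⟩ | ⟨l, hl⟩
    · exact hT1K i _ (hKideal i _ _ (hPK i _ hi))
    · rcases hE u with ⟨i, hi, -⟩ | ⟨l', hl'⟩
      · refine hT1K i _ ?_
        rw [← lie_skew]
        exact (K i).neg_mem (hKideal i _ _ (hPK i _ hi))
      · refine Finset.sum_eq_zero fun r _ => ?_
        rw [hωtt _ (hPtsub l' hl') l _ hl]
        simp
  have hT3 : ∀ u, ∑ v, ∑ r, Q (prk ⁅Eb v, Eb r⁆) (Eb u) * ω (prp ⁅Eb u, Eb v⁆) (Eb r)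
      / (w v * w r) = 0 := by
    intro u
    rcases hE u with ⟨i, hi, -⟩ | ⟨l, hl⟩
    · refine Finset.sum_eq_zero fun v _ => Finset.sum_eq_zero fun r _ => ?_
      rw [hQkP i _ (hprk _) _ hi]
      simp
    · have hu : Eb u ∈ ptil := hPtsub l hl
      -- The element of `k` representing `Q(·, E_u)` on `k`.
      obtain ⟨t, htk, ht⟩ : ∃ t ∈ k, ∀ W ∈ k, Q W (Eb u) = gb W t := by
        refine ⟨prk (∑ i, c i • π i (Eb u)), hprk _, fun W hW => ?_⟩
        have h1 : Q W (Eb u) = gb W (∑ i, c i • π i (Eb u)) := by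
          conv_lhs => rw [← hπsum (Eb u)]
          rw [map_sum, map_sum]
          refine Finset.sum_congr rfl fun i _ => ?_
          rw [hQπ i W _ (hπmem i _), map_smul, hgπ i W _ (hπmem i _), smul_eq_mul]
        rw [h1]
        conv_lhs => rw [← hprsum (∑ i, c i • π i (Eb u))]
        rw [map_add, hgb_symm W (prp _), (hp _).1 (hprp _) W hW, add_zero]
      have htE : ∀ v r, Q (prk ⁅Eb v, Eb r⁆) (Eb u) = gb ⁅t, Eb v⁆ (Eb r) := by
        intro v r
        rw [ht _ (hprk _)]
        have h1 : gb (prk ⁅Eb v, Eb r⁆) t = gb ⁅Eb v, Eb r⁆ t := by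
          conv_rhs => rw [← hprsum ⁅Eb v, Eb r⁆]
          rw [map_add, LinearMap.add_apply, (hp _).1 (hprp _) t htk, add_zero]
        rw [h1, hgb_inv, ← lie_skew (Eb v) t, map_neg, neg_neg, hgb_symm]
      have htP : ∀ i, ∀ X ∈ P i, ⁅t, X⁆ ∈ P i := fun i X hX => hPinv i t htk X hX
      have hst1 : ∀ v, ∑ r, Q (prk ⁅Eb v, Eb r⁆) (Eb u) * ω (prp ⁅Eb u, Eb v⁆) (Eb r)
          / (w v * w r) = (w v * w v)⁻¹ * ω (prp ⁅Eb u, Eb v⁆) ⁅t, Eb v⁆ := by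
        intro v
        conv_rhs => rw [← hprpp _ (hkp t htk _ (hEp v)), hωr, Finset.mul_sum]
        refine Finset.sum_congr rfl fun r _ => ?_
        rw [htE]
        rcases hblock t htP v r with (h | h) | h
        · rw [h]; simp
        · rw [hωtil' _ h]; simp
        · rw [h]; ring
      rw [Finset.sum_congr rfl fun v _ => hst1 v]
      have hst2 : ∑ v, (w v * w v)⁻¹ * ω (prp ⁅Eb u, Eb v⁆) ⁅t, Eb v⁆
          = - ∑ v, (w v * w v)⁻¹ * ω (prp ⁅Eb u, Eb v⁆) ⁅t, Eb v⁆ := by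
        calc ∑ v, (w v * w v)⁻¹ * ω (prp ⁅Eb u, Eb v⁆) ⁅t, Eb v⁆
            = ∑ v, ∑ r, (w r * w r)⁻¹ * (gb ⁅Eb u, Eb v⁆ (Eb r) * ω (Eb r) ⁅t, Eb v⁆) := by
              refine Finset.sum_congr rfl fun v _ => ?_
              rw [hωl, Finset.mul_sum]
              refine Finset.sum_congr rfl fun r _ => ?_
              rcases hblock (Eb u) (hnorm _ hu) v r with (h | h) | h
              · rw [h]; simp
              · rw [hωtil _ h]; simp
              · rw [h]
          _ = ∑ r, ∑ v, (w r * w r)⁻¹ * (gb ⁅Eb u, Eb v⁆ (Eb r) * ω (Eb r) ⁅t, Eb v⁆) :=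
              Finset.sum_comm
          _ = ∑ r, - ((w r * w r)⁻¹ * ω (prp ⁅Eb u, Eb r⁆) ⁅t, Eb r⁆) := by
              refine Finset.sum_congr rfl fun r _ => ?_
              have h1 : ∀ v, ω (Eb r) ⁅t, Eb v⁆ = - ω ⁅t, Eb r⁆ (Eb v) := by
                intro v
                have := hωinv t htk _ (hEp r) _ (hEp v)
                linarith
              rw [← Finset.mul_sum, hωskew (prp _), hωr, mul_neg, neg_neg]
              congr 1
              refine Finset.sum_congr rfl fun v _ => ?_
              rw [h1, hgb_inv, hgb_symm]
              ring
          _ = _ := by rw [Finset.sum_neg_distrib]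
      linarith
  have hS1 : ∑ u, ∑ v, ∑ r, Q ⁅Eb u, Eb v⁆ (Eb r) * ω (prp ⁅Eb u, Eb v⁆) (Eb r)
      / (w u * w v * w r) = 0 := by
    refine Finset.sum_eq_zero fun u _ => Finset.sum_eq_zero fun v _ => ?_
    rw [← mul_zero ((w u * w v)⁻¹), ← hT1 u v, Finset.mul_sum]
    refine Finset.sum_congr rfl fun r _ => ?_
    simp only [div_eq_mul_inv, mul_inv]
    ring
  have hS3 : ∑ u, ∑ v, ∑ r, Q (prk ⁅Eb v, Eb r⁆) (Eb u) * ω (prp ⁅Eb u, Eb v⁆) (Eb r)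
      / (w u * w v * w r) = 0 := by
    refine Finset.sum_eq_zero fun u _ => ?_
    rw [← mul_zero ((w u)⁻¹), ← hT3 u, Finset.mul_sum]
    refine Finset.sum_congr rfl fun v _ => ?_
    rw [Finset.mul_sum]
    refine Finset.sum_congr rfl fun r _ => ?_
    simp only [div_eq_mul_inv, mul_inv]
    ring
  have hS2 : ∑ u, ∑ v, ∑ r, Q (prk ⁅Eb u, Eb r⁆) (Eb v) * ω (prp ⁅Eb u, Eb v⁆) (Eb r)
      / (w u * w v * w r) = 0 := by
    rw [Finset.sum_comm, ← neg_zero, ← hS3]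
    simp only [← Finset.sum_neg_distrib]
    refine Finset.sum_congr rfl fun v _ => Finset.sum_congr rfl fun u _ =>
      Finset.sum_congr rfl fun r _ => ?_
    rw [← lie_skew (Eb u) (Eb v), map_neg, map_neg, LinearMap.neg_apply]
    ring
  have hS : ∑ u, ∑ v, ∑ r, HQ (Eb u) (Eb v) (Eb r) * ω (prp ⁅Eb u, Eb v⁆) (Eb r)
      / (w u * w v * w r) = 0 := by
    have h1 : ∀ u v r, HQ (Eb u) (Eb v) (Eb r) * ω (prp ⁅Eb u, Eb v⁆) (Eb r)
        / (w u * w v * w r)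
        = Q ⁅Eb u, Eb v⁆ (Eb r) * ω (prp ⁅Eb u, Eb v⁆) (Eb r) / (w u * w v * w r)
        - Q (prk ⁅Eb u, Eb r⁆) (Eb v) * ω (prp ⁅Eb u, Eb v⁆) (Eb r) / (w u * w v * w r)
        + Q (prk ⁅Eb v, Eb r⁆) (Eb u) * ω (prp ⁅Eb u, Eb v⁆) (Eb r) / (w u * w v * w r) := by
      intro u v r
      have h0 : Q (prk ⁅Eb u, Eb v⁆) (Eb r) * ω (prp ⁅Eb u, Eb v⁆) (Eb r) = 0 := by
        rcases hE r with ⟨i, hi, -⟩ | ⟨l, hl⟩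
        · rw [hQkP i _ (hprk _) _ hi, zero_mul]
        · rw [hωtil' _ (hPtsub l hl), mul_zero]
      rw [hHQ, ← sub_div, ← add_div]
      congr 1
      linear_combination h0
    simp only [h1, Finset.sum_add_distrib, Finset.sum_sub_distrib, hS1, hS2, hS3]
    norm_num
  -- `H_Q` is alternating.
  have hHswap : ∀ X Y Z, HQ X Z Y = - HQ X Y Z := by
    intro X Y Z
    rw [hHQ, hHQ, hQskew X Z Y, ← lie_skew Z Y, map_neg, map_neg, LinearMap.neg_apply]
    ring
  have hHcyc : ∀ X Y Z, HQ Z X Y = HQ X Y Z := by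
    intro X Y Z
    have h1 : Q ⁅Z, X⁆ Y = Q ⁅X, Y⁆ Z := by
      rw [← lie_skew Z X, map_neg, LinearMap.neg_apply, hQskew X Z Y, neg_neg]
    rw [hHQ, hHQ, h1, ← lie_skew Z X, ← lie_skew Z Y]
    simp only [map_neg, LinearMap.neg_apply]
    ring
  -- The other two terms of `dω` contribute the same as the first, up to sign.
  have hSb : ∑ u, ∑ v, ∑ r, HQ (Eb u) (Eb v) (Eb r) * ω (prp ⁅Eb u, Eb r⁆) (Eb v)
      / (w u * w v * w r) = 0 := by
    rw [← neg_zero, ← hS, ← Finset.sum_neg_distrib]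
    refine Finset.sum_congr rfl fun u _ => ?_
    rw [Finset.sum_comm]
    simp only [← Finset.sum_neg_distrib]
    refine Finset.sum_congr rfl fun v _ => Finset.sum_congr rfl fun r _ => ?_
    rw [hHswap (Eb u) (Eb v) (Eb r)]
    ring
  have hSc : ∑ u, ∑ v, ∑ r, HQ (Eb u) (Eb v) (Eb r) * ω (prp ⁅Eb v, Eb r⁆) (Eb u)
      / (w u * w v * w r) = 0 := by
    rw [← hS, Finset.sum_comm]
    refine Finset.sum_congr rfl fun u _ => ?_
    rw [Finset.sum_comm]
    refine Finset.sum_congr rfl fun v _ => Finset.sum_congr rfl fun r _ => ?_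
    rw [hHcyc (Eb u) (Eb v) (Eb r)]
    ring
  have hfin : ∀ u v r, HQ (Eb u) (Eb v) (Eb r)
          * (- ω (prp ⁅Eb u, Eb v⁆) (Eb r) + ω (prp ⁅Eb u, Eb r⁆) (Eb v)
              - ω (prp ⁅Eb v, Eb r⁆) (Eb u))
          / (w u * w v * w r)
      = - (HQ (Eb u) (Eb v) (Eb r) * ω (prp ⁅Eb u, Eb v⁆) (Eb r) / (w u * w v * w r))
      + HQ (Eb u) (Eb v) (Eb r) * ω (prp ⁅Eb u, Eb r⁆) (Eb v) / (w u * w v * w r)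
      - HQ (Eb u) (Eb v) (Eb r) * ω (prp ⁅Eb v, Eb r⁆) (Eb u) / (w u * w v * w r) := by
    intro u v r
    ring
  simp only [hfin, Finset.sum_add_distrib, Finset.sum_sub_distrib, Finset.sum_neg_distrib,
    hS, hSb, hSc]
  norm_num
end

section
/- With the aligned setup of the context, under Assumption (⋆), and taking g = g_b on p (i.e. x_1 = … = x_{2s−1} = 1): (i) if s ≥ 3, then every closed 3-form H_Q (for Q = y_1·κ_{g_1} + … + y_s·κ_{g_s} with y_1/c_1 + … + y_s/c_s = 0) is g_b-harmonic if and only if z_1 = … = z_s, i.e. if and only if g_b is a positive multiple of the standard metric −κ_g; (ii) if the z_i are not all equal, then the set {Q = Σ_i y_i·κ_{g_i} : Σ_i y_i/c_i = 0 and H_Q is g_b-harmonic} is a one-dimensional vector space, i.e. up to scaling there is exactly one nonzero g_b-harmonic 3-form H_Q. -/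
/-!
Write `g = g_b` and let `R`, `S` be the operators acting on the ideal `g_i` by `1/z_i` and
`y_i/z_i`, so that `κ = -g(R·,·)` and `Q = -g(S·,·)`. The alignment condition says that the forms
`c_i κ_{g_i}` all agree on `k` (`IdealSplitting.aligned`); hence `Q` vanishes on `k × k`.

Expanding traces in an orthonormal basis adapted to `k ⊕ p` gives, for every alternating 2-form
`ω` on `p`, `⟨H_Q, dω⟩ = -(3/2) ⟨Θ, ω⟩` with `Θ(X,Y) = g((SX)_k, RY) - g((SY)_k, RX)`
(`BiinvSplitting.pairing`). As `Θ` is itself alternating and `ad(k)`-invariant, taking `ω = Θ` shows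
that `H_Q` is harmonic exactly when `Θ = 0` (`BiinvSplitting.harmonic_iff`).

If the `z_i` are all equal, `R` is scalar, so `Θ = 0` for every `y`. In general, with
`B = Σ z_i/c_i`, the choice `y₀ = z - B` gives `S = 1 - B R`, and `Θ = 0` because `g((RX)_k, RY)` is
symmetric (`AlignedMetric.crit_base`). Conversely, fix `0 ≠ Z ∈ k` and evaluate `Θ = 0` on
`X = Σ x_i Z_i` and `Y = Σ x'_i Z_i`, which lie in `p` when `Σ z_i x_i/c_i = Σ z_i x'_i/c_i = 0`.
This yields `(Σ y_i x'_i/c_i)(Σ x_i/c_i) = (Σ y_i x_i/c_i)(Σ x'_i/c_i)`; if the `z_i` are not all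
equal this forces `y` to be a multiple of `y₀` (`coeff_unique`, `AlignedMetric.crit_unique`). For
`s ≥ 3` the hyperplane `Σ y_i/c_i = 0` has dimension at least two, so not all its elements are
multiples of `y₀`.
-/

open scoped BigOperators

/-- `Q_y = Σ_i y_i κ_{g_i}(·_i, ·_i)`. -/
noncomputable def QyForm {L : Type} [LieRing L] [LieAlgebra ℝ L] {m : ℕ}
    (K : Fin (m + 1) → LieSubalgebra ℝ L) (π : Fin (m + 1) → (L →ₗ[ℝ] L))
    (hπmem : ∀ i X, π i X ∈ K i) (y : Fin (m + 1) → ℝ) (X Y : L) : ℝ :=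
  ∑ i, y i * killingForm ℝ ↥(K i) ⟨π i X, hπmem i X⟩ ⟨π i Y, hπmem i Y⟩

/-- The closed 3-form `H_Q` attached to `Q = Σ y_i κ_{g_i}` (with `[·,·]_k = prk [·,·]`). -/
noncomputable def HQform {L : Type} [LieRing L] [LieAlgebra ℝ L] {m : ℕ}
    (K : Fin (m + 1) → LieSubalgebra ℝ L) (π : Fin (m + 1) → (L →ₗ[ℝ] L))
    (hπmem : ∀ i X, π i X ∈ K i) (prk : L →ₗ[ℝ] L)
    (y : Fin (m + 1) → ℝ) (X Y Z : L) : ℝ :=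
  QyForm K π hπmem y ⁅X, Y⁆ Z + QyForm K π hπmem y (prk ⁅X, Y⁆) Z
    - QyForm K π hπmem y (prk ⁅X, Z⁆) Y + QyForm K π hπmem y (prk ⁅Y, Z⁆) X

/-- `H_{Q_y}` is `g`-harmonic: `g(H_{Q_y}, dω) = 0` for every `ad(k)`-invariant
alternating 2-form `ω` on the `g_b`-orthogonal complement `p` of `k`, the inner product
being computed via the adapted `g_b`-orthonormal basis `Eb` of `p`, with weights `w`. -/
noncomputable def IsHarmonicHQ {L : Type} [LieRing L] [LieAlgebra ℝ L] {m n : ℕ}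
    (K : Fin (m + 1) → LieSubalgebra ℝ L) (π : Fin (m + 1) → (L →ₗ[ℝ] L))
    (hπmem : ∀ i X, π i X ∈ K i) (k : LieSubalgebra ℝ L)
    (gb : LinearMap.BilinForm ℝ L) (prk prp : L →ₗ[ℝ] L)
    (Eb : Fin n → L) (w : Fin n → ℝ) (y : Fin (m + 1) → ℝ) : Prop :=
  ∀ ω : LinearMap.BilinForm ℝ L,
    (∀ X : L, ω X X = 0) →
    (∀ Z ∈ k, ∀ X Y : L, (∀ W ∈ k, gb X W = 0) → (∀ W ∈ k, gb Y W = 0) →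
      ω ⁅Z, X⁆ Y + ω X ⁅Z, Y⁆ = 0) →
    ∑ u : Fin n, ∑ v : Fin n, ∑ r : Fin n,
      HQform K π hπmem prk y (Eb u) (Eb v) (Eb r)
        * (- ω (prp ⁅Eb u, Eb v⁆) (Eb r) + ω (prp ⁅Eb u, Eb r⁆) (Eb v)
            - ω (prp ⁅Eb v, Eb r⁆) (Eb u))
        / (w u * w v * w r) = 0

/-! ### Orthonormal families and traces -/

/-- A family that is orthonormal for `g` reproduces every vector of its span. -/
lemma orthonormal_expand {L ι : Type*} [AddCommGroup L] [Module ℝ L] [Fintype ι] [DecidableEq ι]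
    {g : LinearMap.BilinForm ℝ L} {e : ι → L}
    (hon : ∀ i j, g (e i) (e j) = if i = j then 1 else 0)
    {X : L} (hX : X ∈ Submodule.span ℝ (Set.range e)) : ∑ i, g X (e i) • e i = X := by
  obtain ⟨a, rfl⟩ := (Submodule.mem_span_range_iff_exists_fun ℝ).1 hX
  refine Finset.sum_congr rfl fun i _ => ?_
  congr 1
  simp [hon, LinearMap.sum_apply]

/-- The trace of an endomorphism in a spanning family that is orthonormal for `g`. -/
lemma trace_eq_sum_orthonormal {L ι : Type*} [AddCommGroup L] [Module ℝ L]
    [Fintype ι] [DecidableEq ι] {g : LinearMap.BilinForm ℝ L} {e : ι → L}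
    (hon : ∀ i j, g (e i) (e j) = if i = j then 1 else 0)
    (hspan : ∀ X, X ∈ Submodule.span ℝ (Set.range e)) (f : L →ₗ[ℝ] L) :
    LinearMap.trace ℝ L f = ∑ i, g (f (e i)) (e i) := by
  have hli : LinearIndependent ℝ e := by
    rw [Fintype.linearIndependent_iff]
    intro a ha i
    have := congrArg (fun X => g X (e i)) ha
    simpa [hon, LinearMap.sum_apply] using this
  let b := Module.Basis.mk hli (fun X _ => hspan X)
  have hb : ∀ i, b i = e i := fun i => by simp [b]
  rw [LinearMap.trace_eq_matrix_trace ℝ b, Matrix.trace]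
  refine Finset.sum_congr rfl fun i _ => ?_
  rw [Matrix.diag_apply, LinearMap.toMatrix_apply, hb]
  have h := orthonormal_expand hon (hspan (f (e i)))
  conv_lhs => rw [← h]
  simp [← hb, Finsupp.single_apply]

/-- A positive definite symmetric form has an orthonormal basis on every subspace. -/
lemma exists_orthonormal_family {L : Type*} [AddCommGroup L] [Module ℝ L] [FiniteDimensional ℝ L]
    {g : LinearMap.BilinForm ℝ L} (hsymm : ∀ X Y, g X Y = g Y X)
    (hpos : ∀ X, X ≠ 0 → 0 < g X X) (W : Submodule ℝ L) :
    ∃ (q : ℕ) (F : Fin q → L), (∀ a, F a ∈ W) ∧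
      (∀ a b, g (F a) (F b) = if a = b then 1 else 0) ∧
      ∀ X ∈ W, X ∈ Submodule.span ℝ (Set.range F) := by
  obtain ⟨v, hv⟩ := LinearMap.BilinForm.exists_orthogonal_basis (B := g.restrict W)
    ⟨fun X Y => hsymm X Y⟩
  have hv0 : ∀ a, 0 < g (v a : L) (v a) := fun a =>
    hpos _ (fun h => v.ne_zero a (Subtype.ext h))
  refine ⟨_, fun a => (Real.sqrt (g (v a : L) (v a)))⁻¹ • (v a : L),
    fun a => W.smul_mem _ (v a).2, fun a b => ?_, fun X hX => ?_⟩
  · by_cases hab : a = b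
    · subst hab
      have h1 := Real.mul_self_sqrt (hv0 a).le
      have h2 := Real.sqrt_pos.2 (hv0 a)
      simp only [map_smul, LinearMap.smul_apply, smul_eq_mul, if_true]
      field_simp
      linarith
    · have : g (v a : L) (v b) = 0 := hv hab
      simp [this, hab]
  · have h := congrArg (Subtype.val) (v.sum_repr ⟨X, hX⟩)
    simp only [Submodule.coe_sum, Submodule.coe_smul] at h
    rw [← h]
    refine Submodule.sum_mem _ fun a _ => Submodule.smul_mem _ _ ?_
    have h2 := (Real.sqrt_pos.2 (hv0 a)).ne'
    have : (v a : L) = Real.sqrt (g (v a : L) (v a)) •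
        ((Real.sqrt (g (v a : L) (v a)))⁻¹ • (v a : L)) := by
      rw [smul_smul, mul_inv_cancel₀ h2, one_smul]
    rw [this]
    exact Submodule.smul_mem _ _ (Submodule.subset_span ⟨a, rfl⟩)

/-! ### The codifferential of `H_Q` for a bi-invariant metric -/

/-- A reductive splitting `L = k ⊕ p` that is orthogonal for a bi-invariant inner product `g`,
together with a `g`-orthonormal basis `Eb` of `p`.  Two self-adjoint operators `R`, `S` commuting
with `ad` describe the Killing form, `κ = -g(R·,·)`, and the form `Q = -g(S·,·)`; the latter
vanishes on `k × k`. -/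
structure BiinvSplitting {L : Type} [LieRing L] [LieAlgebra ℝ L] {n : ℕ}
    (k : LieSubalgebra ℝ L) (g : LinearMap.BilinForm ℝ L) (prk prp : L →ₗ[ℝ] L)
    (Eb : Fin n → L) (R S : L →ₗ[ℝ] L) : Prop where
  symm : ∀ X Y, g X Y = g Y X
  pos : ∀ X, X ≠ 0 → 0 < g X X
  inv : ∀ X Y Z : L, g ⁅X, Y⁆ Z = g X ⁅Y, Z⁆
  prk_mem : ∀ X, prk X ∈ k
  prp_orth : ∀ X, ∀ Z ∈ k, g (prp X) Z = 0
  pr_sum : ∀ X, prk X + prp X = X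
  Eb_mem : ∀ u, ∀ Z ∈ k, g (Eb u) Z = 0
  Eb_on : ∀ u v, g (Eb u) (Eb v) = if u = v then 1 else 0
  Eb_span : ∀ X, (∀ Z ∈ k, g X Z = 0) → X ∈ Submodule.span ℝ (Set.range Eb)
  R_symm : ∀ X Y, g (R X) Y = g X (R Y)
  S_symm : ∀ X Y, g (S X) Y = g X (S Y)
  S_lie : ∀ X Y : L, S ⁅X, Y⁆ = ⁅X, S Y⁆
  R_lie : ∀ X Y : L, R ⁅X, Y⁆ = ⁅X, R Y⁆
  R_S : ∀ X, R (S X) = S (R X)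
  killing : ∀ X Y, killingForm ℝ L X Y = - g (R X) Y
  S_k : ∀ Z ∈ k, ∀ W ∈ k, g (S Z) W = 0

/-- The 3-form `H_Q` for `Q = -g(S·,·)`. -/
def HS {L : Type} [LieRing L] [LieAlgebra ℝ L] (g : LinearMap.BilinForm ℝ L)
    (prk S : L →ₗ[ℝ] L) (X Y Z : L) : ℝ :=
  -g (S ⁅X, Y⁆) Z - g (S (prk ⁅X, Y⁆)) Z + g (S (prk ⁅X, Z⁆)) Y - g (S (prk ⁅Y, Z⁆)) X

/-- Up to a constant, the codifferential of `H_Q`: the 2-form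
`Θ(X,Y) = g((SX)_k, RY) - g((SY)_k, RX)` on `p`, extended by zero along `k`. -/
def ThetaForm {L : Type} [LieRing L] [LieAlgebra ℝ L] (g : LinearMap.BilinForm ℝ L)
    (prk prp R S : L →ₗ[ℝ] L) : LinearMap.BilinForm ℝ L :=
  g.compl₁₂ (prk ∘ₗ S ∘ₗ prp) (R ∘ₗ prp) - (g.compl₁₂ (prk ∘ₗ S ∘ₗ prp) (R ∘ₗ prp)).flip

lemma ThetaForm_apply {L : Type} [LieRing L] [LieAlgebra ℝ L] (g : LinearMap.BilinForm ℝ L)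
    (prk prp R S : L →ₗ[ℝ] L) (X Y : L) : ThetaForm g prk prp R S X Y
      = g (prk (S (prp X))) (R (prp Y)) - g (prk (S (prp Y))) (R (prp X)) := by
  simp [ThetaForm]

namespace BiinvSplitting

variable {L : Type} [LieRing L] [LieAlgebra ℝ L] {n : ℕ}
    {k : LieSubalgebra ℝ L} {g : LinearMap.BilinForm ℝ L} {prk prp : L →ₗ[ℝ] L}
    {Eb : Fin n → L} {R S : L →ₗ[ℝ] L}

lemma k_of_p (h : BiinvSplitting k g prk prp Eb R S) {X : L} (hX : ∀ Z ∈ k, g X Z = 0) :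
    prk X = 0 := by
  by_contra hne
  have h1 := h.pos _ hne
  have h2 : prk X = X - prp X := eq_sub_of_add_eq (h.pr_sum X)
  have h3 : g (prk X) (prk X) = g X (prk X) - g (prp X) (prk X) := by
    conv_lhs => rw [h2, LinearMap.map_sub₂, ← h2]
  rw [hX _ (h.prk_mem X), h.prp_orth _ _ (h.prk_mem X)] at h3
  linarith

lemma p_of_p (h : BiinvSplitting k g prk prp Eb R S) {X : L} (hX : ∀ Z ∈ k, g X Z = 0) :
    prp X = X := by
  simpa [h.k_of_p hX] using h.pr_sum X

lemma p_of_k (h : BiinvSplitting k g prk prp Eb R S) {X : L} (hX : X ∈ k) : prp X = 0 := by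
  by_contra hne
  have h2 : prp X = X - prk X := eq_sub_of_add_eq' (h.pr_sum X)
  have h3 := h.prp_orth X _ (k.sub_mem hX (h.prk_mem X))
  rw [← h2] at h3
  exact (h.pos _ hne).ne' h3

lemma k_of_k (h : BiinvSplitting k g prk prp Eb R S) {X : L} (hX : X ∈ k) : prk X = X := by
  simpa [h.p_of_k hX] using h.pr_sum X

lemma g_prk (h : BiinvSplitting k g prk prp Eb R S) (X : L) {Z : L} (hZ : Z ∈ k) :
    g (prk X) Z = g X Z := by
  conv_rhs => rw [← h.pr_sum X]
  simp [h.prp_orth X Z hZ]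

lemma prk_symm (h : BiinvSplitting k g prk prp Eb R S) (X Y : L) : g (prk X) Y = g X (prk Y) := by
  rw [← h.g_prk X (h.prk_mem Y), h.symm, ← h.g_prk Y (h.prk_mem X), h.symm]

lemma g_prp (h : BiinvSplitting k g prk prp Eb R S) {X : L} (hX : ∀ Z ∈ k, g X Z = 0) (Y : L) :
    g X (prp Y) = g X Y := by
  conv_rhs => rw [← h.pr_sum Y]
  simp [hX _ (h.prk_mem Y)]

lemma inv' (h : BiinvSplitting k g prk prp Eb R S) (X Y Z : L) : g ⁅Z, X⁆ Y = - g X ⁅Z, Y⁆ := by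
  rw [← lie_skew, map_neg, LinearMap.neg_apply, h.inv]

lemma lie_p (h : BiinvSplitting k g prk prp Eb R S) {Z X : L} (hZ : Z ∈ k)
    (hX : ∀ W ∈ k, g X W = 0) : ∀ W ∈ k, g ⁅Z, X⁆ W = 0 := fun W hW => by
  rw [h.inv', hX _ (k.lie_mem hZ hW), neg_zero]

lemma prk_lie (h : BiinvSplitting k g prk prp Eb R S) {Z : L} (hZ : Z ∈ k) (X : L) :
    prk ⁅Z, X⁆ = ⁅Z, prk X⁆ := by
  conv_lhs => rw [← h.pr_sum X, lie_add, map_add, h.k_of_k (k.lie_mem hZ (h.prk_mem X)),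
    h.k_of_p (h.lie_p hZ (h.prp_orth X)), add_zero]

lemma S_lie' (h : BiinvSplitting k g prk prp Eb R S) (X Y : L) : S ⁅X, Y⁆ = ⁅S X, Y⁆ := by
  rw [← lie_skew, map_neg, h.S_lie, lie_skew]

/-- Parseval's identity on `p`. -/
lemma parseval_p (h : BiinvSplitting k g prk prp Eb R S) (X Y : L) :
    ∑ u, g X (Eb u) * g Y (Eb u) = g (prp X) Y := by
  have hx := orthonormal_expand h.Eb_on (h.Eb_span _ (h.prp_orth X))
  conv_rhs => rw [← hx]
  simp only [LinearMap.map_sum₂, LinearMap.map_smul₂, smul_eq_mul]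
  refine Finset.sum_congr rfl fun u _ => ?_
  rw [h.symm (Eb u) Y, h.symm (prp X), h.g_prp (h.Eb_mem u), h.symm X]

lemma expand_k (h : BiinvSplitting k g prk prp Eb R S) {q : ℕ} {F : Fin q → L}
    (hFmem : ∀ a, F a ∈ k) (hFon : ∀ a b, g (F a) (F b) = if a = b then 1 else 0)
    (hFspan : ∀ X ∈ k, X ∈ Submodule.span ℝ (Set.range F)) (X Y : L) :
    g (prk X) Y = ∑ a, g X (F a) * g (F a) Y := by
  have hx := orthonormal_expand hFon (hFspan _ (h.prk_mem X))
  conv_lhs => rw [← hx]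
  simp only [LinearMap.map_sum₂, LinearMap.map_smul₂, smul_eq_mul]
  refine Finset.sum_congr rfl fun a _ => ?_
  rw [h.g_prk X (hFmem a)]

/-- The Killing form in a basis adapted to `k ⊕ p`. -/
lemma R_expand (h : BiinvSplitting k g prk prp Eb R S) {q : ℕ} {F : Fin q → L}
    (hFmem : ∀ a, F a ∈ k) (hFon : ∀ a b, g (F a) (F b) = if a = b then 1 else 0)
    (hFspan : ∀ X ∈ k, X ∈ Submodule.span ℝ (Set.range F)) (X Y : L) :
    g (R X) Y = ∑ u, g ⁅X, Eb u⁆ ⁅Y, Eb u⁆ + ∑ a, g ⁅X, F a⁆ ⁅Y, F a⁆ := by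
  have hk := h.killing X Y
  have e : ∀ W, g ⁅X, ⁅Y, W⁆⁆ W = - g ⁅X, W⁆ ⁅Y, W⁆ := fun W => by rw [h.inv', h.symm]
  rw [killingForm_apply_apply, trace_eq_sum_orthonormal (g := g) (e := Sum.elim Eb F)] at hk
  · simp only [Fintype.sum_sum_type, Sum.elim_inl, Sum.elim_inr, LinearMap.comp_apply,
      LieAlgebra.ad_apply, e, Finset.sum_neg_distrib] at hk
    linarith
  · rintro (u | a) (v | b)
    · simp [h.Eb_on]
    · simp [h.Eb_mem u _ (hFmem b)]
    · simp [h.symm (F a), h.Eb_mem v _ (hFmem a)]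
    · simp [hFon]
  · intro X
    rw [← h.pr_sum X, Set.Sum.elim_range, Submodule.span_union]
    exact add_comm (prk X) _ ▸ Submodule.add_mem_sup (h.Eb_span _ (h.prp_orth X))
      (hFspan _ (h.prk_mem X))

/-- The tensor `Φ(A,B) = Σ g([u,v],A) g([u,v],B)`, summed over the basis of `p`, through the
Killing form and a basis of `k`. -/
lemma phi_eq (h : BiinvSplitting k g prk prp Eb R S) {q : ℕ} {F : Fin q → L}
    (hFmem : ∀ a, F a ∈ k) (hFon : ∀ a b, g (F a) (F b) = if a = b then 1 else 0)
    (hFspan : ∀ X ∈ k, X ∈ Submodule.span ℝ (Set.range F)) (A B : L) :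
    ∑ u, ∑ v, g ⁅Eb u, Eb v⁆ A * g ⁅Eb u, Eb v⁆ B
      = g (R A) B - ∑ a, g ⁅F a, A⁆ ⁅F a, B⁆ - ∑ a, g (prp ⁅F a, A⁆) ⁅F a, B⁆ := by
  have e1 : ∀ u v C, g ⁅Eb u, Eb v⁆ C = g ⁅C, Eb u⁆ (Eb v) := fun u v C => by
    rw [h.symm, ← h.inv]
  have e2 : ∀ u, g (prp ⁅A, Eb u⁆) ⁅B, Eb u⁆
      = g ⁅A, Eb u⁆ ⁅B, Eb u⁆ - ∑ a, g ⁅F a, A⁆ (Eb u) * g ⁅F a, B⁆ (Eb u) := fun u => by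
    have h1 := h.expand_k hFmem hFon hFspan ⁅A, Eb u⁆ ⁅B, Eb u⁆
    have h2 : g ⁅A, Eb u⁆ ⁅B, Eb u⁆ = g (prk ⁅A, Eb u⁆) ⁅B, Eb u⁆ + g (prp ⁅A, Eb u⁆) ⁅B, Eb u⁆ := by
      conv_lhs => rw [← h.pr_sum ⁅A, Eb u⁆]
      simp
    have h3 : ∀ a, g ⁅A, Eb u⁆ (F a) = g ⁅F a, A⁆ (Eb u) := fun a => by rw [h.symm, ← h.inv]
    simp only [h3, ← h.inv (F _) B] at h1
    linarith
  simp only [e1, h.parseval_p, e2, Finset.sum_sub_distrib]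
  rw [Finset.sum_comm]
  simp only [h.parseval_p]
  rw [h.R_expand hFmem hFon hFspan]
  have e3 : ∀ a, g ⁅A, F a⁆ ⁅B, F a⁆ = g ⁅F a, A⁆ ⁅F a, B⁆ := fun a => by
    rw [← lie_skew A, ← lie_skew B, map_neg, map_neg, LinearMap.neg_apply, neg_neg]
  simp only [e3]
  ring

/-- The skew part of `D(X,Y) = Σ H(u,v,X) g([u,v],Y)`.  All the terms except those coming from
`Q([u,v]_k, X)` are symmetric in `X, Y ∈ p`. -/
lemma D_skew [FiniteDimensional ℝ L] (h : BiinvSplitting k g prk prp Eb R S) {X Y : L}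
    (hX : ∀ Z ∈ k, g X Z = 0) (hY : ∀ Z ∈ k, g Y Z = 0) :
    ∑ u, ∑ v, HS g prk S (Eb u) (Eb v) X * g ⁅Eb u, Eb v⁆ Y
      - ∑ u, ∑ v, HS g prk S (Eb u) (Eb v) Y * g ⁅Eb u, Eb v⁆ X
      = g (prk (S Y)) (R X) - g (prk (S X)) (R Y) := by
  obtain ⟨q, F, hFmem, hFon, hFspan⟩ := exists_orthonormal_family h.symm h.pos k.toSubmodule
  have key : ∀ {X Y : L}, (∀ Z ∈ k, g X Z = 0) → (∀ Z ∈ k, g Y Z = 0) →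
      ∑ u, ∑ v, HS g prk S (Eb u) (Eb v) X * g ⁅Eb u, Eb v⁆ Y
        = - g (S X) (R Y) - g (prk (S X)) (R Y) := by
    intro X Y hX hY
    have third : ∑ u, ∑ v, g (S (prk ⁅Eb u, X⁆)) (Eb v) * g ⁅Eb u, Eb v⁆ Y
        = - ∑ a, g ⁅F a, X⁆ (S ⁅F a, Y⁆) := by
      have e1 : ∀ u v, g ⁅Eb u, Eb v⁆ Y = g ⁅Y, Eb u⁆ (Eb v) := fun u v => by
        rw [h.symm, ← h.inv]
      simp only [e1, h.parseval_p]
      have e2 : ∀ u, g (prp (S (prk ⁅Eb u, X⁆))) ⁅Y, Eb u⁆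
          = - ∑ a, g ⁅F a, X⁆ (Eb u) * g (S ⁅F a, Y⁆) (Eb u) := fun u => by
        have h1 : prp (S (prk ⁅Eb u, X⁆)) = S (prk ⁅Eb u, X⁆) :=
          h.p_of_p (h.S_k _ (h.prk_mem _))
        rw [h1, h.S_symm, h.expand_k hFmem hFon hFspan, ← Finset.sum_neg_distrib]
        refine Finset.sum_congr rfl fun a _ => ?_
        rw [← h.S_symm, ← h.inv, h.S_lie', h.symm ⁅Eb u, X⁆, ← lie_skew, map_neg, ← h.inv]
        ring
      simp only [e2, Finset.sum_neg_distrib]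
      rw [Finset.sum_comm]
      simp only [h.parseval_p]
      congr 1
      refine Finset.sum_congr rfl fun a _ => ?_
      rw [h.p_of_p (h.lie_p (hFmem a) hX)]
    have fourth : ∑ u, ∑ v, g (S (prk ⁅Eb v, X⁆)) (Eb u) * g ⁅Eb u, Eb v⁆ Y
        = ∑ a, g ⁅F a, X⁆ (S ⁅F a, Y⁆) := by
      rw [Finset.sum_comm, ← neg_inj, ← third, ← Finset.sum_neg_distrib]
      refine Finset.sum_congr rfl fun u _ => ?_
      rw [← Finset.sum_neg_distrib]
      refine Finset.sum_congr rfl fun v _ => ?_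
      rw [← lie_skew (Eb u) (Eb v), map_neg, LinearMap.neg_apply, mul_neg]
    have first : ∑ u, ∑ v, g ⁅Eb u, Eb v⁆ (S X) * g ⁅Eb u, Eb v⁆ Y
        = g (S X) (R Y) - 2 * ∑ a, g ⁅F a, X⁆ (S ⁅F a, Y⁆) := by
      rw [h.phi_eq hFmem hFon hFspan, h.R_symm]
      have e1 : ∀ a, g ⁅F a, S X⁆ ⁅F a, Y⁆ = g ⁅F a, X⁆ (S ⁅F a, Y⁆) := fun a => by
        rw [← h.S_lie, h.S_symm]
      have e2 : ∀ a, g (prp ⁅F a, S X⁆) ⁅F a, Y⁆ = g ⁅F a, X⁆ (S ⁅F a, Y⁆) := fun a => by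
        rw [h.symm, h.g_prp (h.lie_p (hFmem a) hY), h.symm, e1]
      simp only [e1, e2]
      ring
    have second : ∑ u, ∑ v, g (prk ⁅Eb u, Eb v⁆) (S X) * g ⁅Eb u, Eb v⁆ Y
        = g (prk (S X)) (R Y) := by
      simp only [h.prk_symm]
      rw [h.phi_eq hFmem hFon hFspan, h.R_symm]
      have e1 : ∀ a, g ⁅F a, prk (S X)⁆ ⁅F a, Y⁆ = 0 := fun a => by
        rw [h.symm]
        exact h.lie_p (hFmem a) hY _ (k.lie_mem (hFmem a) (h.prk_mem _))
      have e2 : ∀ a, prp ⁅F a, prk (S X)⁆ = 0 := fun a =>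
        h.p_of_k (k.lie_mem (hFmem a) (h.prk_mem _))
      simp [e1, e2, h.prk_symm]
    have : ∀ u v, HS g prk S (Eb u) (Eb v) X * g ⁅Eb u, Eb v⁆ Y
        = - (g ⁅Eb u, Eb v⁆ (S X) * g ⁅Eb u, Eb v⁆ Y)
          - g (prk ⁅Eb u, Eb v⁆) (S X) * g ⁅Eb u, Eb v⁆ Y
          + g (S (prk ⁅Eb u, X⁆)) (Eb v) * g ⁅Eb u, Eb v⁆ Y
          - g (S (prk ⁅Eb v, X⁆)) (Eb u) * g ⁅Eb u, Eb v⁆ Y := fun u v => by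
      rw [HS, h.S_symm ⁅Eb u, Eb v⁆, h.S_symm (prk ⁅Eb u, Eb v⁆)]
      ring
    simp only [this, Finset.sum_sub_distrib, Finset.sum_add_distrib, Finset.sum_neg_distrib,
      first, second, third, fourth]
    ring
  rw [key hX hY, key hY hX]
  have : g (S X) (R Y) = g (S Y) (R X) := by
    rw [← h.R_symm, h.R_S, h.S_symm, h.symm]
  rw [this]
  ring

lemma HS_swap (h : BiinvSplitting k g prk prp Eb R S) (X Y Z : L) :
    HS g prk S X Z Y = - HS g prk S X Y Z := by
  have e : g (S ⁅X, Z⁆) Y = - g (S ⁅X, Y⁆) Z := by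
    rw [h.S_lie, h.inv', h.S_symm, h.S_lie', h.symm]
  have e2 : g (S (prk ⁅Z, Y⁆)) X = - g (S (prk ⁅Y, Z⁆)) X := by
    rw [← lie_skew]; simp only [map_neg, LinearMap.neg_apply]
  rw [HS, HS, e, e2]
  ring

lemma HS_skew (X Y Z : L) : HS g prk S Y X Z = - HS g prk S X Y Z := by
  rw [HS, HS, ← lie_skew X Y]
  simp only [map_neg, LinearMap.neg_apply]
  ring

/-- The pairing of `H_Q` with `dω` is a multiple of the pairing of `Θ` with `ω`. -/
lemma pairing [FiniteDimensional ℝ L] (h : BiinvSplitting k g prk prp Eb R S)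
    (ω : LinearMap.BilinForm ℝ L) (hω : ∀ X, ω X X = 0) :
    ∑ u : Fin n, ∑ v : Fin n, ∑ r : Fin n, HS g prk S (Eb u) (Eb v) (Eb r)
        * (- ω (prp ⁅Eb u, Eb v⁆) (Eb r) + ω (prp ⁅Eb u, Eb r⁆) (Eb v)
            - ω (prp ⁅Eb v, Eb r⁆) (Eb u))
      = -(3 / 2) * ∑ w, ∑ r, ThetaForm g prk prp R S (Eb w) (Eb r) * ω (Eb w) (Eb r) := by
  set H := fun u v r => HS g prk S (Eb u) (Eb v) (Eb r) with hH
  set T := fun u v r => ω (prp ⁅Eb u, Eb v⁆) (Eb r) with hT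
  have s1 : ∀ u v r, H u r v = - H u v r := fun u v r => h.HS_swap _ _ _
  have s2 : ∀ u v r, H v u r = - H u v r := fun u v r => HS_skew _ _ _
  have a1 : ∑ u, ∑ v, ∑ r, H u v r * T u r v = - ∑ u, ∑ v, ∑ r, H u v r * T u v r := by
    rw [← Finset.sum_neg_distrib]
    refine Finset.sum_congr rfl fun u _ => ?_
    rw [Finset.sum_comm, ← Finset.sum_neg_distrib]
    refine Finset.sum_congr rfl fun v _ => ?_
    rw [← Finset.sum_neg_distrib]
    exact Finset.sum_congr rfl fun r _ => by rw [s1]; ring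
  have a2 : ∑ u, ∑ v, ∑ r, H u v r * T v r u = ∑ u, ∑ v, ∑ r, H u v r * T u v r := by
    rw [Finset.sum_comm]
    refine Finset.sum_congr rfl fun u _ => ?_
    rw [Finset.sum_comm]
    refine Finset.sum_congr rfl fun v _ => ?_
    exact Finset.sum_congr rfl fun r _ => by rw [s2, s1]; ring
  have a3 : ∑ u, ∑ v, ∑ r, H u v r * T u v r
      = ∑ w, ∑ r, (∑ u, ∑ v, H u v r * g ⁅Eb u, Eb v⁆ (Eb w)) * ω (Eb w) (Eb r) := by
    have e : ∀ u v r, T u v r = ∑ w, g ⁅Eb u, Eb v⁆ (Eb w) * ω (Eb w) (Eb r) := fun u v r => by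
      have hx := orthonormal_expand h.Eb_on (h.Eb_span _ (h.prp_orth ⁅Eb u, Eb v⁆))
      simp only [hT]
      conv_lhs => rw [← hx]
      simp only [LinearMap.map_sum₂, LinearMap.map_smul₂, smul_eq_mul]
      refine Finset.sum_congr rfl fun w _ => ?_
      rw [h.symm (prp _), h.g_prp (h.Eb_mem w), h.symm (Eb w)]
    simp only [e, Finset.mul_sum, Finset.sum_mul]
    calc _ = ∑ u, ∑ v, ∑ w, ∑ r, H u v r * (g ⁅Eb u, Eb v⁆ (Eb w) * ω (Eb w) (Eb r)) :=
          Finset.sum_congr rfl fun u _ => Finset.sum_congr rfl fun v _ => Finset.sum_comm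
      _ = ∑ u, ∑ w, ∑ v, ∑ r, H u v r * (g ⁅Eb u, Eb v⁆ (Eb w) * ω (Eb w) (Eb r)) :=
          Finset.sum_congr rfl fun u _ => Finset.sum_comm
      _ = ∑ w, ∑ u, ∑ v, ∑ r, H u v r * (g ⁅Eb u, Eb v⁆ (Eb w) * ω (Eb w) (Eb r)) :=
          Finset.sum_comm
      _ = ∑ w, ∑ u, ∑ r, ∑ v, H u v r * (g ⁅Eb u, Eb v⁆ (Eb w) * ω (Eb w) (Eb r)) :=
          Finset.sum_congr rfl fun w _ => Finset.sum_congr rfl fun u _ => Finset.sum_comm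
      _ = ∑ w, ∑ r, ∑ u, ∑ v, H u v r * (g ⁅Eb u, Eb v⁆ (Eb w) * ω (Eb w) (Eb r)) :=
          Finset.sum_congr rfl fun w _ => Finset.sum_comm
      _ = _ := by simp only [mul_assoc]
  set D := fun r w => ∑ u, ∑ v, H u v r * g ⁅Eb u, Eb v⁆ (Eb w) with hD
  have hωs : ∀ w r, ω (Eb r) (Eb w) = - ω (Eb w) (Eb r) := fun w r => by
    have h1 := hω (Eb w + Eb r)
    simp only [map_add, LinearMap.add_apply, hω] at h1
    linarith
  have a4 : ∑ w, ∑ r, D r w * ω (Eb w) (Eb r) = - ∑ w, ∑ r, D w r * ω (Eb w) (Eb r) := by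
    rw [Finset.sum_comm, ← Finset.sum_neg_distrib]
    refine Finset.sum_congr rfl fun r _ => ?_
    rw [← Finset.sum_neg_distrib]
    exact Finset.sum_congr rfl fun w _ => by rw [hωs]; ring
  have a5 : ∑ w, ∑ r, ThetaForm g prk prp R S (Eb w) (Eb r) * ω (Eb w) (Eb r)
      = ∑ w, ∑ r, D r w * ω (Eb w) (Eb r) - ∑ w, ∑ r, D w r * ω (Eb w) (Eb r) := by
    simp only [← Finset.sum_sub_distrib, ← sub_mul]
    refine Finset.sum_congr rfl fun w _ => Finset.sum_congr rfl fun r _ => ?_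
    congr 1
    rw [ThetaForm_apply, h.p_of_p (h.Eb_mem w), h.p_of_p (h.Eb_mem r)]
    exact (h.D_skew (h.Eb_mem r) (h.Eb_mem w)).symm
  have a6 : ∀ u v r, H u v r * (- T u v r + T u r v - T v r u)
      = - (H u v r * T u v r) + H u v r * T u r v - H u v r * T v r u := fun u v r => by ring
  change ∑ u, ∑ v, ∑ r, H u v r * (- T u v r + T u r v - T v r u) = _
  simp only [a6, Finset.sum_sub_distrib, Finset.sum_add_distrib, Finset.sum_neg_distrib]
  rw [a1, a2, a5, a3]
  linarith

/-- `Θ` is itself an `ad(k)`-invariant 2-form on `p`, hence an admissible test form. -/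
lemma Theta_inv (h : BiinvSplitting k g prk prp Eb R S) {Z : L} (hZ : Z ∈ k) {X Y : L}
    (hX : ∀ W ∈ k, g X W = 0) (hY : ∀ W ∈ k, g Y W = 0) :
    ThetaForm g prk prp R S ⁅Z, X⁆ Y + ThetaForm g prk prp R S X ⁅Z, Y⁆ = 0 := by
  simp only [ThetaForm_apply, h.p_of_p (h.lie_p hZ hX), h.p_of_p (h.lie_p hZ hY), h.p_of_p hX,
    h.p_of_p hY, h.S_lie, h.R_lie, h.prk_lie hZ, h.inv']
  ring

/-- `H_Q` is harmonic exactly when `Θ` vanishes: pair `H_Q` with `dΘ`. -/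
lemma harmonic_iff [FiniteDimensional ℝ L] (h : BiinvSplitting k g prk prp Eb R S) :
    (∀ ω : LinearMap.BilinForm ℝ L, (∀ X : L, ω X X = 0) →
      (∀ Z ∈ k, ∀ X Y : L, (∀ W ∈ k, g X W = 0) → (∀ W ∈ k, g Y W = 0) →
        ω ⁅Z, X⁆ Y + ω X ⁅Z, Y⁆ = 0) →
      ∑ u : Fin n, ∑ v : Fin n, ∑ r : Fin n, HS g prk S (Eb u) (Eb v) (Eb r)
        * (- ω (prp ⁅Eb u, Eb v⁆) (Eb r) + ω (prp ⁅Eb u, Eb r⁆) (Eb v)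
            - ω (prp ⁅Eb v, Eb r⁆) (Eb u)) = 0)
    ↔ ∀ X Y, (∀ W ∈ k, g X W = 0) → (∀ W ∈ k, g Y W = 0) →
        g (prk (S X)) (R Y) = g (prk (S Y)) (R X) := by
  constructor
  · intro hh X Y hX hY
    have h0 := hh (ThetaForm g prk prp R S) (fun X => by simp [ThetaForm_apply])
      (fun Z hZ X Y hX hY => h.Theta_inv hZ hX hY)
    rw [h.pairing _ (fun X => by simp [ThetaForm_apply])] at h0
    have h1 : ∑ w, ∑ r, ThetaForm g prk prp R S (Eb w) (Eb r) *
        ThetaForm g prk prp R S (Eb w) (Eb r) = 0 := by linarith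
    have hnn : ∀ w r, 0 ≤ ThetaForm g prk prp R S (Eb w) (Eb r) *
        ThetaForm g prk prp R S (Eb w) (Eb r) := fun w r => mul_self_nonneg _
    rw [Finset.sum_eq_zero_iff_of_nonneg
      (fun w _ => Finset.sum_nonneg fun r _ => hnn w r)] at h1
    have h2 : ∀ w r, ThetaForm g prk prp R S (Eb w) (Eb r) = 0 := fun w r => by
      have := h1 w (Finset.mem_univ _)
      rw [Finset.sum_eq_zero_iff_of_nonneg (fun r _ => hnn w r)] at this
      exact mul_self_eq_zero.1 (this r (Finset.mem_univ _))
    have h3 : ThetaForm g prk prp R S X Y = 0 := by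
      rw [← orthonormal_expand h.Eb_on (h.Eb_span X hX),
        ← orthonormal_expand h.Eb_on (h.Eb_span Y hY)]
      simp [LinearMap.sum_apply, h2]
    rw [ThetaForm_apply, h.p_of_p hX, h.p_of_p hY] at h3
    linarith
  · intro hh ω hω _
    rw [h.pairing ω hω]
    have : ∀ w r, ThetaForm g prk prp R S (Eb w) (Eb r) = 0 := fun w r => by
      rw [ThetaForm_apply, h.p_of_p (h.Eb_mem w), h.p_of_p (h.Eb_mem r),
        hh _ _ (h.Eb_mem w) (h.Eb_mem r), sub_self]
    simp [this]

end BiinvSplitting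

/-! ### Simple ideals and the aligned condition -/

/-- A simple Lie algebra is perfect: a linear form killing all brackets is zero. -/
lemma simple_linear_form_eq_zero {M : Type*} [LieRing M] [LieAlgebra ℝ M]
    (hM : LieAlgebra.IsSimple ℝ M) (f : M →ₗ[ℝ] ℝ) (hf : ∀ A B : M, f ⁅A, B⁆ = 0) (X : M) :
    f X = 0 := by
  rcases hM.eq_bot_or_eq_top ⁅(⊤ : LieIdeal ℝ M), (⊤ : LieIdeal ℝ M)⁆ with h | h
  · exfalso
    apply hM.non_abelian
    refine ⟨fun A B => ?_⟩
    have := LieSubmodule.lie_mem_lie (I := (⊤ : LieIdeal ℝ M)) (N := (⊤ : LieIdeal ℝ M))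
      (LieSubmodule.mem_top A) (LieSubmodule.mem_top B)
    rwa [h, LieSubmodule.mem_bot] at this
  · have hX : X ∈ (⁅(⊤ : LieIdeal ℝ M), (⊤ : LieIdeal ℝ M)⁆).toSubmodule := by
      rw [h]; trivial
    rw [LieSubmodule.lieIdeal_oper_eq_linear_span'] at hX
    have hle : Submodule.span ℝ {⁅x, n⁆ | (x ∈ (⊤ : LieIdeal ℝ M)) (n ∈ (⊤ : LieIdeal ℝ M))}
        ≤ LinearMap.ker f := by
      rw [Submodule.span_le]
      rintro _ ⟨A, -, B, -, rfl⟩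
      exact hf A B
    exact hle hX

/-- The Killing form of an ideal is the restriction of the Killing form. -/
lemma killing_of_ideal {L : Type} [LieRing L] [LieAlgebra ℝ L] [FiniteDimensional ℝ L]
    (K : LieSubalgebra ℝ L) (hK : ∀ X Y : L, Y ∈ K → ⁅X, Y⁆ ∈ K) (X Y : K) :
    killingForm ℝ K X Y = killingForm ℝ L X Y := by
  let I : LieIdeal ℝ L := { K.toSubmodule with lie_mem := fun {X Y} hY => hK X Y hY }
  exact LinearMap.congr_fun₂ (LieIdeal.killingForm_eq ℝ L I) X Y

/-- The decomposition of `L` into the ideals `K i`, with projections `π i`. -/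
structure IdealSplitting {L : Type} [LieRing L] [LieAlgebra ℝ L] {ι : Type} [Fintype ι]
    (K : ι → LieSubalgebra ℝ L) (π : ι → (L →ₗ[ℝ] L)) : Prop where
  ideal : ∀ (i : ι) (X Y : L), Y ∈ K i → ⁅X, Y⁆ ∈ K i
  mem : ∀ i X, π i X ∈ K i
  sum : ∀ X : L, ∑ i, π i X = X
  id : ∀ i X, X ∈ K i → π i X = X
  zero : ∀ i j, i ≠ j → ∀ X, X ∈ K i → π j X = 0

/-- The operator acting on the ideal `K i` as multiplication by `a i`. -/
noncomputable def diagOp {L : Type} [LieRing L] [LieAlgebra ℝ L] {ι : Type} [Fintype ι]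
    (π : ι → (L →ₗ[ℝ] L)) (a : ι → ℝ) : L →ₗ[ℝ] L := ∑ i, a i • π i

lemma diagOp_apply {L : Type} [LieRing L] [LieAlgebra ℝ L] {ι : Type} [Fintype ι]
    (π : ι → (L →ₗ[ℝ] L)) (a : ι → ℝ) (X : L) : diagOp π a X = ∑ i, a i • π i X := by
  simp [diagOp, LinearMap.sum_apply]

namespace IdealSplitting

variable {L : Type} [LieRing L] [LieAlgebra ℝ L] {ι : Type} [Fintype ι]
  {K : ι → LieSubalgebra ℝ L} {π : ι → (L →ₗ[ℝ] L)}

lemma pi_lie (h : IdealSplitting K π) (i : ι) (X Y : L) : π i ⁅X, Y⁆ = ⁅X, π i Y⁆ := by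
  conv_lhs => rw [← h.sum Y]
  rw [lie_sum, map_sum, Finset.sum_eq_single i]
  · exact h.id _ _ (h.ideal _ _ _ (h.mem i Y))
  · intro j _ hj
    exact h.zero j i hj _ (h.ideal _ _ _ (h.mem j Y))
  · simp

lemma lie_pi_pi (h : IdealSplitting K π) (i : ι) (X Y : L) : ⁅π i X, π i Y⁆ = π i ⁅X, Y⁆ := by
  have h1 : ⁅π i X, Y⁆ = π i ⁅X, Y⁆ := by
    rw [← lie_skew, ← h.pi_lie, ← map_neg, lie_skew]
  rw [← h.pi_lie, h1, h.id i _ (h.mem i _)]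

lemma pi_diagOp (h : IdealSplitting K π) (a : ι → ℝ) (i : ι) (X : L) :
    π i (diagOp π a X) = a i • π i X := by
  rw [diagOp_apply, map_sum, Finset.sum_eq_single i]
  · rw [map_smul, h.id i _ (h.mem i X)]
  · intro j _ hj
    rw [map_smul, h.zero j i hj _ (h.mem j X), smul_zero]
  · simp

lemma diagOp_diagOp (h : IdealSplitting K π) (a b : ι → ℝ) (X : L) :
    diagOp π a (diagOp π b X) = diagOp π (fun i => a i * b i) X := by
  rw [diagOp_apply π a, diagOp_apply π (fun i => a i * b i)]
  simp only [h.pi_diagOp, smul_smul]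

lemma diagOp_lie (h : IdealSplitting K π) (a : ι → ℝ) (X Y : L) :
    diagOp π a ⁅X, Y⁆ = ⁅X, diagOp π a Y⁆ := by
  simp [diagOp_apply, h.pi_lie, lie_sum]

/-- Distinct ideals are orthogonal for the Killing form. -/
lemma killing_ne (h : IdealSplitting K π) {i j : ι} (hij : i ≠ j) {A B : L} (hA : A ∈ K i)
    (hB : B ∈ K j) : killingForm ℝ L A B = 0 := by
  have : LieAlgebra.ad ℝ L A ∘ₗ LieAlgebra.ad ℝ L B = 0 := by
    ext W
    simp only [LinearMap.comp_apply, LieAlgebra.ad_apply, LinearMap.zero_apply]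
    have h1 : ⁅A, ⁅B, W⁆⁆ ∈ K i := by
      rw [← lie_skew]; exact (K i).neg_mem (h.ideal _ _ _ hA)
    have h2 : ⁅A, ⁅B, W⁆⁆ ∈ K j := by
      refine h.ideal _ _ _ ?_
      rw [← lie_skew]; exact (K j).neg_mem (h.ideal _ _ _ hB)
    rw [← h.id i _ h1, h.zero j i hij.symm _ h2]
  rw [killingForm_apply_apply, this, map_zero]

lemma killing_pi (h : IdealSplitting K π) (i : ι) (X Y : L) :
    killingForm ℝ L (π i X) (π i Y) = killingForm ℝ L (π i X) Y := by
  conv_rhs => rw [← h.sum Y]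
  rw [map_sum, Finset.sum_eq_single i]
  · intro j _ hj
    exact h.killing_ne hj.symm (h.mem i X) (h.mem j Y)
  · simp

lemma killing_pi_symm (h : IdealSplitting K π) (i : ι) (X Y : L) :
    killingForm ℝ L (π i X) Y = killingForm ℝ L X (π i Y) := by
  rw [← h.killing_pi, LieModule.traceForm_comm, h.killing_pi, LieModule.traceForm_comm]

lemma killing_diagOp_symm (h : IdealSplitting K π) (a : ι → ℝ) (X Y : L) :
    killingForm ℝ L (diagOp π a X) Y = killingForm ℝ L X (diagOp π a Y) := by
  rw [diagOp_apply, diagOp_apply, map_sum, map_sum, LinearMap.sum_apply]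
  refine Finset.sum_congr rfl fun i _ => ?_
  rw [map_smul, map_smul, LinearMap.smul_apply, h.killing_pi_symm]

/-- `Σ a_i κ_{g_i}` through the Killing form of `L`. -/
lemma sum_killing (h : IdealSplitting K π) [FiniteDimensional ℝ L] (a : ι → ℝ) (X Y : L) :
    ∑ i, a i * killingForm ℝ (K i) ⟨π i X, h.mem i X⟩ ⟨π i Y, h.mem i Y⟩
      = killingForm ℝ L (diagOp π a X) Y := by
  rw [diagOp_apply, map_sum, LinearMap.sum_apply]
  refine Finset.sum_congr rfl fun i _ => ?_
  rw [killing_of_ideal (K i) (h.ideal i), h.killing_pi, map_smul, LinearMap.smul_apply,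
    smul_eq_mul]

/-- `π i` restricts to an isomorphism from a simple subalgebra onto its nonzero image, and so
preserves the Killing form. -/
lemma killing_image (h : IdealSplitting K π) (i : ι) (s P : LieSubalgebra ℝ L)
    (hs : LieAlgebra.IsSimple ℝ s) (hP : (P : Set L) = π i '' (s : Set L)) (hne : P ≠ ⊥)
    (U V : s) (hU : π i U ∈ P) (hV : π i V ∈ P) :
    killingForm ℝ P ⟨π i U, hU⟩ ⟨π i V, hV⟩ = killingForm ℝ s U V := by
  have hmem : ∀ U : s, π i U ∈ P := fun U => by
    have : π i U ∈ (P : Set L) := hP ▸ ⟨U, U.2, rfl⟩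
    exact this
  let f : s →ₗ⁅ℝ⁆ P :=
    { toFun := fun U => ⟨π i U, hmem U⟩
      map_add' := fun U V => Subtype.ext (by simp)
      map_smul' := fun a U => Subtype.ext (by simp)
      map_lie' := fun {U V} => Subtype.ext (by simp [h.lie_pi_pi]) }
  have hker : f.ker = ⊥ := by
    rcases hs.eq_bot_or_eq_top f.ker with hk | hk
    · exact hk
    · exfalso
      apply hne
      rw [eq_bot_iff]
      intro W hW
      have hW' : W ∈ π i '' (s : Set L) := hP ▸ hW
      obtain ⟨U, hU, rfl⟩ := hW'
      have : (⟨U, hU⟩ : s) ∈ f.ker := by rw [hk]; trivial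
      rw [LieHom.mem_ker] at this
      exact (LieSubalgebra.mem_bot _).2 (congrArg Subtype.val this)
  have hinj : Function.Injective f := by
    rwa [← LieHom.ker_eq_bot]
  have hsurj : Function.Surjective f := by
    rintro ⟨W, hW⟩
    have hW' : W ∈ π i '' (s : Set L) := hP ▸ hW
    obtain ⟨U, hU, rfl⟩ := hW'
    exact ⟨⟨U, hU⟩, rfl⟩
  let e : s ≃ₗ⁅ℝ⁆ P := LieEquiv.ofBijective f ⟨hinj, hsurj⟩
  exact LieAlgebra.killingForm_of_equiv_apply e U V

/-- The aligned condition: on `k` the forms `c_i κ_{g_i}` all agree.  Their differences are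
invariant, vanish on the center and on each simple factor, and hence vanish. -/
lemma aligned (h : IdealSplitting K π) [FiniteDimensional ℝ L]
    (k k₀ : LieSubalgebra ℝ L)
    (hk₀ : ∀ W : L, W ∈ k₀ ↔ (W ∈ k ∧ ∀ Z ∈ k, ⁅Z, W⁆ = 0))
    {t : ℕ} (kj : Fin t → LieSubalgebra ℝ L)
    (hkjideal : ∀ (j : Fin t) (Z W : L), Z ∈ k → W ∈ kj j → ⁅Z, W⁆ ∈ kj j)
    (hkjsimple : ∀ j, LieAlgebra.IsSimple ℝ ↥(kj j))
    (hkdecomp : ∀ Z ∈ k, ∃ (Z₀ : L) (f : Fin t → L),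
      Z₀ ∈ k₀ ∧ (∀ j, f j ∈ kj j) ∧ Z = Z₀ + ∑ j, f j)
    (c : ι → ℝ) (hcpos : ∀ i, 0 < c i)
    (lam : Fin t → ℝ) (hlam : ∀ j, 0 < lam j)
    (P : ι → Fin t → LieSubalgebra ℝ L)
    (hPset : ∀ i j, (P i j : Set L) = (π i) '' (kj j : Set L))
    (hPK : ∀ i j (U : L), U ∈ P i j → U ∈ K i)
    (hPne : ∀ i j, P i j ≠ ⊥)
    (hkilling : ∀ i j (U V : ↥(P i j)),
      killingForm ℝ ↥(P i j) U V
        = (lam j * c i) * killingForm ℝ ↥(K i) ⟨(U : L), hPK i j U U.2⟩ ⟨(V : L), hPK i j V V.2⟩)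
    (ip0 : LinearMap.BilinForm ℝ L)
    (hip0 : ∀ (i : ι), ∀ Z ∈ k₀, ∀ W ∈ k₀,
      killingForm ℝ ↥(K i) ⟨π i Z, h.mem i Z⟩ ⟨π i W, h.mem i W⟩ = -(1 / c i) * ip0 Z W)
    (i i' : ι) {Z W : L} (hZ : Z ∈ k) (hW : W ∈ k) :
    c i * killingForm ℝ L (π i Z) W = c i' * killingForm ℝ L (π i' Z) W := by
  -- the difference of the two forms
  let D : LinearMap.BilinForm ℝ L :=
    c i • (killingForm ℝ L).comp (π i) LinearMap.id
      - c i' • (killingForm ℝ L).comp (π i') LinearMap.id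
  have hD : ∀ X Y, D X Y = c i * killingForm ℝ L (π i X) Y - c i' * killingForm ℝ L (π i' X) Y :=
    fun X Y => by simp [D]
  have hDsymm : ∀ X Y, D X Y = D Y X := fun X Y => by
    rw [hD, hD, h.killing_pi_symm i, h.killing_pi_symm i', LieModule.traceForm_comm ℝ L L X,
      LieModule.traceForm_comm ℝ L L X]
  have hDinv : ∀ X Y V, D ⁅X, Y⁆ V = D X ⁅Y, V⁆ := fun X Y V => by
    rw [hD, hD, h.killing_pi_symm i, h.killing_pi_symm i', h.killing_pi_symm i,
      h.killing_pi_symm i', LieModule.traceForm_apply_lie_apply,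
      LieModule.traceForm_apply_lie_apply, h.pi_lie, h.pi_lie]
  have h00 : ∀ X ∈ k₀, ∀ Y ∈ k₀, D X Y = 0 := fun X hX Y hY => by
    have e : ∀ i, c i * killingForm ℝ L (π i X) Y = - ip0 X Y := fun i => by
      rw [← h.killing_pi, ← killing_of_ideal (K i) (h.ideal i) ⟨π i X, h.mem i X⟩
        ⟨π i Y, h.mem i Y⟩, hip0 i X hX Y hY]
      have := (hcpos i).ne'
      field_simp
    rw [hD, e, e, sub_self]
  have hjj : ∀ j, ∀ X ∈ kj j, ∀ Y ∈ kj j, D X Y = 0 := fun j X hX Y hY => by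
    have e : ∀ i, c i * killingForm ℝ L (π i X) Y
        = (lam j)⁻¹ * killingForm ℝ (kj j) ⟨X, hX⟩ ⟨Y, hY⟩ := fun i => by
      have hXP : π i X ∈ P i j := by
        have : π i X ∈ (P i j : Set L) := hPset i j ▸ ⟨X, hX, rfl⟩
        exact this
      have hYP : π i Y ∈ P i j := by
        have : π i Y ∈ (P i j : Set L) := hPset i j ▸ ⟨Y, hY, rfl⟩
        exact this
      rw [← h.killing_image i (kj j) (P i j) (hkjsimple j) (hPset i j) (hPne i j) ⟨X, hX⟩ ⟨Y, hY⟩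
        hXP hYP, hkilling, killing_of_ideal (K i) (h.ideal i), ← h.killing_pi]
      have := (hlam j).ne'
      field_simp
    rw [hD, e, e, sub_self]
  have hjk : ∀ j, ∀ X ∈ kj j, ∀ Y ∈ k, D X Y = 0 := fun j X hX Y hY => by
    refine simple_linear_form_eq_zero (hkjsimple j)
      ((D.flip Y).comp (kj j).toSubmodule.subtype) (fun A B => ?_) ⟨X, hX⟩
    change D ⁅(A : L), (B : L)⁆ Y = 0
    rw [hDinv]
    refine hjj j _ A.2 _ ?_
    rw [← lie_skew]
    exact (kj j).neg_mem (hkjideal j _ _ hY B.2)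
  obtain ⟨Z₀, f, hZ₀, hf, rfl⟩ := hkdecomp Z hZ
  obtain ⟨W₀, f', hW₀, hf', rfl⟩ := hkdecomp W hW
  have : D (Z₀ + ∑ j, f j) (W₀ + ∑ j, f' j) = 0 := by
    rw [LinearMap.map_add₂, LinearMap.map_sum₂,
      Finset.sum_eq_zero (fun j _ => hjk j _ (hf j) _ hW), add_zero, map_add, map_sum,
      h00 _ hZ₀ _ hW₀, zero_add]
    exact Finset.sum_eq_zero fun j _ => by
      rw [hDsymm]; exact hjk j _ (hf' j) _ ((hk₀ _).1 hZ₀).1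
  rw [hD] at this
  linarith

end IdealSplitting

/-! ### The linear algebra of the coefficients -/

/-- Let `z` be nonconstant and `Σ y/c = 0`. If `(Σ y x'/c)(Σ x/c) = (Σ y x/c)(Σ x'/c)` for all
`x, x'` with `Σ z x/c = Σ z x'/c = 0`, then `y` is a multiple of `z - Σ z/c`. -/
lemma coeff_unique {ι : Type} [Fintype ι] (c z y : ι → ℝ) (hc : ∀ i, 0 < c i)
    (hcsum : ∑ i, 1 / c i = 1) (hz : ∀ i, 0 < z i) (hy : ∑ i, y i / c i = 0)
    (hne : ¬ ∀ i i', z i = z i')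
    (hxx : ∀ x x' : ι → ℝ, ∑ i, z i * x i / c i = 0 → ∑ i, z i * x' i / c i = 0 →
      (∑ i, y i * x' i / c i) * (∑ i, x i / c i) = (∑ i, y i * x i / c i) * (∑ i, x' i / c i)) :
    ∃ r : ℝ, ∀ i, y i = r * (z i - ∑ l, z l / c l) := by
  set B := ∑ l, z l / c l with hB
  have hι : Nonempty ι := by
    by_contra h
    rw [not_nonempty_iff] at h
    simp at hcsum
  have hBpos : 0 < B := Finset.sum_pos (fun i _ => div_pos (hz i) (hc i)) Finset.univ_nonempty
  -- since `z, c > 0`, the vanishing of `Σ z x²/c` forces `x = 0`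
  have hpos : ∀ x : ι → ℝ, ∑ i, z i * x i ^ 2 / c i = 0 → ∀ i, x i = 0 := fun x hx i => by
    have := (Finset.sum_eq_zero_iff_of_nonneg (fun i _ => by
      have := hz i; have := hc i; positivity)).1 hx i (Finset.mem_univ _)
    have h1 := (hz i).ne'
    have h2 := (hc i).ne'
    simpa [h1, h2] using this
  let x' : ι → ℝ := fun i => 1 / z i - 1 / B
  have hx' : ∑ i, z i * x' i / c i = 0 := by
    have : ∀ i, z i * x' i / c i = 1 / c i - (z i / c i) * (1 / B) := fun i => by
      have := (hz i).ne'
      simp only [x']; field_simp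
    simp only [this, Finset.sum_sub_distrib, hcsum, ← Finset.sum_mul, ← hB]
    field_simp; ring
  have hδ : ∑ i, x' i / c i ≠ 0 := by
    intro h0
    apply hne
    have h1 : ∑ i, z i * x' i ^ 2 / c i = 0 := by
      have : ∀ i, z i * x' i ^ 2 / c i = x' i / c i - (1 / B) * (z i * x' i / c i) := fun i => by
        have := (hz i).ne'
        simp only [x']; field_simp
      simp only [this, Finset.sum_sub_distrib, ← Finset.mul_sum, h0, hx']
      ring
    have h2 : ∀ i, z i = B := fun i => by
      have h3 := hpos _ h1 i
      have h4 := hz i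
      simp only [x'] at h3
      field_simp at h3
      linarith
    intro i i'
    rw [h2, h2]
  set ρ := (∑ i, y i * x' i / c i) / (∑ i, x' i / c i) with hρ
  have hlin : ∀ x : ι → ℝ, ∑ i, z i * x i / c i = 0 → ∑ i, (y i - ρ) * x i / c i = 0 := by
    intro x hx
    have h1 := hxx x x' hx hx'
    have : ∀ i, (y i - ρ) * x i / c i = y i * x i / c i - ρ * (x i / c i) := fun i => by ring
    simp only [this, Finset.sum_sub_distrib, ← Finset.mul_sum]
    rw [hρ]
    field_simp
    linarith
  let x : ι → ℝ := fun i => (y i - ρ) / z i + ρ / B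
  have hzx : ∀ i, z i * x i = (y i - ρ) + z i * (ρ / B) := fun i => by
    have := (hz i).ne'
    simp only [x]; field_simp
  have hx : ∑ i, z i * x i / c i = 0 := by
    have : ∀ i, z i * x i / c i = y i / c i - ρ * (1 / c i) + (z i / c i) * (ρ / B) := fun i => by
      rw [hzx]; ring
    simp only [this, Finset.sum_sub_distrib, Finset.sum_add_distrib, ← Finset.mul_sum,
      ← Finset.sum_mul, hcsum, hy, ← hB]
    field_simp; ring
  have hx2 : ∑ i, z i * x i ^ 2 / c i = 0 := by
    have : ∀ i, z i * x i ^ 2 / c i = (y i - ρ) * x i / c i + (ρ / B) * (z i * x i / c i) :=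
      fun i => by
        have : z i * x i ^ 2 = ((y i - ρ) + z i * (ρ / B)) * x i := by rw [← hzx]; ring
        rw [this]; ring
    simp only [this, Finset.sum_add_distrib, ← Finset.mul_sum, hlin x hx, hx]
    ring
  refine ⟨-(ρ / B), fun i => ?_⟩
  have h1 := hzx i
  rw [hpos x hx2 i] at h1
  have : ρ / B * B = ρ := by field_simp
  linear_combination -h1 - this

/-! ### The metric `g_b` on an aligned pair -/

/-- The metric `g = g_b`, written `g(X,Y) = -κ(z X, Y)` with `z` acting diagonally on the simple
ideals, together with the orthogonal splitting of `L` along a subalgebra `k` on which the forms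
`c_i κ_{g_i}` all agree. -/
structure AlignedMetric {L : Type} [LieRing L] [LieAlgebra ℝ L] {ι : Type} [Fintype ι]
    (K : ι → LieSubalgebra ℝ L) (π : ι → (L →ₗ[ℝ] L)) (k : LieSubalgebra ℝ L) (c z : ι → ℝ)
    (g : LinearMap.BilinForm ℝ L) (prk prp : L →ₗ[ℝ] L) : Prop where
  split : IdealSplitting K π
  neg : ∀ X : L, X ≠ 0 → killingForm ℝ L X X < 0
  cpos : ∀ i, 0 < c i
  csum : ∑ i, 1 / c i = 1
  zpos : ∀ i, 0 < z i
  aligned : ∀ i i', ∀ Z ∈ k, ∀ W ∈ k,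
    c i * killingForm ℝ L (π i Z) W = c i' * killingForm ℝ L (π i' Z) W
  metric : ∀ X Y, g X Y = - killingForm ℝ L (diagOp π z X) Y
  prk_mem : ∀ X, prk X ∈ k
  prp_orth : ∀ X, ∀ Z ∈ k, g (prp X) Z = 0
  pr_sum : ∀ X, prk X + prp X = X

namespace AlignedMetric

variable {L : Type} [LieRing L] [LieAlgebra ℝ L] {ι : Type} [Fintype ι]
  {K : ι → LieSubalgebra ℝ L} {π : ι → (L →ₗ[ℝ] L)} {k : LieSubalgebra ℝ L} {c z : ι → ℝ}
  {g : LinearMap.BilinForm ℝ L} {prk prp : L →ₗ[ℝ] L}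

lemma nonempty (h : AlignedMetric K π k c z g prk prp) : Nonempty ι := by
  by_contra hn
  rw [not_nonempty_iff] at hn
  simpa using h.csum

lemma B_pos (h : AlignedMetric K π k c z g prk prp) : 0 < ∑ i, z i / c i := by
  have := h.nonempty
  exact Finset.sum_pos (fun i _ => div_pos (h.zpos i) (h.cpos i)) Finset.univ_nonempty

lemma metric_diagOp (h : AlignedMetric K π k c z g prk prp) (a : ι → ℝ) (X Y : L) :
    g (diagOp π a X) Y = - killingForm ℝ L (diagOp π (fun i => z i * a i) X) Y := by
  rw [h.metric, h.split.diagOp_diagOp]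

lemma killing_eq (h : AlignedMetric K π k c z g prk prp) (a : ι → ℝ) (X Y : L) :
    killingForm ℝ L (diagOp π a X) Y = - g (diagOp π (fun i => a i / z i) X) Y := by
  rw [h.metric_diagOp, neg_neg]
  have : (fun i => z i * (a i / z i)) = a := by
    funext i
    have := (h.zpos i).ne'
    field_simp
  rw [this]

lemma diagOp_one (h : AlignedMetric K π k c z g prk prp) (X : L) :
    diagOp π (fun _ => 1) X = X := by
  simp [diagOp_apply, h.split.sum]

lemma symm (h : AlignedMetric K π k c z g prk prp) (X Y : L) : g X Y = g Y X := by
  rw [h.metric, h.metric, h.split.killing_diagOp_symm, LieModule.traceForm_comm]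

lemma diagOp_symm (h : AlignedMetric K π k c z g prk prp) (a : ι → ℝ) (X Y : L) :
    g (diagOp π a X) Y = g X (diagOp π a Y) := by
  rw [h.metric_diagOp, h.symm X, h.metric_diagOp, h.split.killing_diagOp_symm,
    LieModule.traceForm_comm]

lemma inv (h : AlignedMetric K π k c z g prk prp) (X Y Z : L) : g ⁅X, Y⁆ Z = g X ⁅Y, Z⁆ := by
  rw [h.metric, h.metric, h.split.killing_diagOp_symm, h.split.killing_diagOp_symm,
    LieModule.traceForm_apply_lie_apply, h.split.diagOp_lie]

lemma pos (h : AlignedMetric K π k c z g prk prp) (X : L) (hX : X ≠ 0) : 0 < g X X := by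
  have hsum : g X X = ∑ i, z i * (- killingForm ℝ L (π i X) (π i X)) := by
    rw [h.metric, diagOp_apply, LinearMap.map_sum₂, ← Finset.sum_neg_distrib]
    refine Finset.sum_congr rfl fun i _ => ?_
    rw [LinearMap.map_smul₂, smul_eq_mul, h.split.killing_pi, mul_neg]
  have hnn : ∀ i, 0 ≤ - killingForm ℝ L (π i X) (π i X) := fun i => by
    by_cases h0 : π i X = 0
    · simp [h0]
    · have := h.neg _ h0
      linarith
  obtain ⟨i, hi⟩ : ∃ i, π i X ≠ 0 := by
    by_contra! h0
    exact hX (by rw [← h.split.sum X]; simp [h0])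
  rw [hsum]
  refine Finset.sum_pos' (fun i _ => mul_nonneg (h.zpos i).le (hnn i)) ⟨i, Finset.mem_univ _, ?_⟩
  have := h.neg _ hi
  exact mul_pos (h.zpos i) (by linarith)

/-- On `k`, all diagonal forms are proportional to `g`. -/
lemma diagOp_k (h : AlignedMetric K π k c z g prk prp) (a : ι → ℝ) {Z W : L} (hZ : Z ∈ k)
    (hW : W ∈ k) :
    g (diagOp π a Z) W = (∑ i, z i * a i / c i) / (∑ i, z i / c i) * g Z W := by
  obtain ⟨i₀⟩ := h.nonempty
  have key : ∀ b : ι → ℝ, killingForm ℝ L (diagOp π b Z) W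
      = (∑ i, b i / c i) * (c i₀ * killingForm ℝ L (π i₀ Z) W) := fun b => by
    rw [diagOp_apply, LinearMap.map_sum₂, Finset.sum_mul]
    refine Finset.sum_congr rfl fun i _ => ?_
    rw [LinearMap.map_smul₂, smul_eq_mul, ← h.aligned i i₀ Z hZ W hW]
    have := (h.cpos i).ne'
    field_simp
  have hB := h.B_pos.ne'
  rw [h.metric_diagOp, h.metric Z, key, key]
  field_simp

lemma prk_diagOp (h : AlignedMetric K π k c z g prk prp) (a : ι → ℝ) {Z : L} (hZ : Z ∈ k) :
    prk (diagOp π a Z) = ((∑ i, z i * a i / c i) / (∑ i, z i / c i)) • Z := by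
  by_contra hne
  have h1 := h.pos _ (sub_ne_zero.2 hne)
  set D := prk (diagOp π a Z) - ((∑ i, z i * a i / c i) / (∑ i, z i / c i)) • Z with hD
  have hDk : D ∈ k := k.sub_mem (h.prk_mem _) (k.smul_mem _ hZ)
  have h2 : g D D = 0 := by
    have h3 : g (prk (diagOp π a Z)) D = g (diagOp π a Z) D := by
      conv_rhs => rw [← h.pr_sum (diagOp π a Z)]
      rw [LinearMap.map_add₂, h.prp_orth _ _ hDk, add_zero]
    conv_lhs => rw [hD]
    rw [← hD, LinearMap.map_sub₂, LinearMap.map_smul₂, h3, h.diagOp_k a hZ hDk, smul_eq_mul,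
      sub_self]
  linarith

lemma diagOp_orth (h : AlignedMetric K π k c z g prk prp) (a : ι → ℝ)
    (ha : ∑ i, z i * a i / c i = 0) {Z : L} (hZ : Z ∈ k) : ∀ W ∈ k, g (diagOp π a Z) W = 0 :=
  fun W hW => by rw [h.diagOp_k a hZ hW, ha, zero_div, zero_mul]

/-- The data entering `BiinvSplitting.harmonic_iff`: `R` and `S` act on the `i`-th ideal by `1/z_i`
and `y_i/z_i`. -/
lemma biinv (h : AlignedMetric K π k c z g prk prp) {n : ℕ} {Eb : Fin n → L}
    (hEmem : ∀ u, ∀ Z ∈ k, g (Eb u) Z = 0)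
    (hEon : ∀ u v, g (Eb u) (Eb v) = if u = v then 1 else 0)
    (hEspan : ∀ X, (∀ Z ∈ k, g X Z = 0) → X ∈ Submodule.span ℝ (Set.range Eb))
    (y : ι → ℝ) (hy : ∑ i, y i / c i = 0) :
    BiinvSplitting k g prk prp Eb (diagOp π fun i => 1 / z i) (diagOp π fun i => y i / z i) where
  symm := h.symm
  pos := h.pos
  inv := h.inv
  prk_mem := h.prk_mem
  prp_orth := h.prp_orth
  pr_sum := h.pr_sum
  Eb_mem := hEmem
  Eb_on := hEon
  Eb_span := hEspan
  R_symm := h.diagOp_symm _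
  S_symm := h.diagOp_symm _
  S_lie := h.split.diagOp_lie _
  R_lie := h.split.diagOp_lie _
  R_S := fun X => by
    rw [h.split.diagOp_diagOp, h.split.diagOp_diagOp]
    simp only [mul_comm]
  killing := fun X Y => by
    rw [← h.killing_eq (fun _ => 1), h.diagOp_one]
  S_k := fun Z hZ W hW => by
    refine h.diagOp_orth _ ?_ hZ W hW
    rw [← hy]
    refine Finset.sum_congr rfl fun i _ => ?_
    have := (h.zpos i).ne'
    field_simp

/-- The criterion `Θ = 0` for `H_Q` to be harmonic, with `Q = Σ y_i κ_{g_i}`. -/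
def Crit {L : Type} [LieRing L] [LieAlgebra ℝ L] {ι : Type} [Fintype ι]
    (π : ι → (L →ₗ[ℝ] L)) (k : LieSubalgebra ℝ L) (z : ι → ℝ)
    (g : LinearMap.BilinForm ℝ L) (prk : L →ₗ[ℝ] L) (y : ι → ℝ) : Prop :=
  ∀ X Y, (∀ W ∈ k, g X W = 0) → (∀ W ∈ k, g Y W = 0) →
    g (prk (diagOp π (fun i => y i / z i) X)) (diagOp π (fun i => 1 / z i) Y)
      = g (prk (diagOp π (fun i => y i / z i) Y)) (diagOp π (fun i => 1 / z i) X)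

lemma g_prk_symm (h : AlignedMetric K π k c z g prk prp) (X Y : L) :
    g (prk X) Y = g (prk Y) X := by
  have key : ∀ U V, g (prk U) V = g (prk U) (prk V) := fun U V => by
    conv_lhs => rw [← h.pr_sum V]
    rw [map_add, h.symm _ (prp V), h.prp_orth _ _ (h.prk_mem U), add_zero]
  rw [key X Y, key Y X, h.symm]

lemma prk_p (h : AlignedMetric K π k c z g prk prp) {X : L} (hX : ∀ W ∈ k, g X W = 0) :
    prk X = 0 := by
  by_contra hne
  have h1 := h.pos _ hne
  have h2 : g (prk X) (prk X) = g X (prk X) := by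
    have h3 := congrArg (fun V => g V (prk X)) (h.pr_sum X)
    simpa [h.prp_orth _ _ (h.prk_mem X)] using h3
  rw [h2, hX _ (h.prk_mem X)] at h1
  exact lt_irrefl _ h1

/-- For `z` constant, `R` is scalar, and `g((SX)_k, RY)` vanishes on `p`. -/
lemma crit_of_const (h : AlignedMetric K π k c z g prk prp) (hconst : ∀ i i', z i = z i')
    (y : ι → ℝ) : Crit π k z g prk y := by
  obtain ⟨i₀⟩ := h.nonempty
  have hR : ∀ X, diagOp π (fun i => 1 / z i) X = (1 / z i₀) • X := fun X => by
    conv_rhs => rw [← h.split.sum X]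
    rw [diagOp_apply, Finset.smul_sum]
    exact Finset.sum_congr rfl fun i _ => by rw [hconst i i₀]
  intro X Y hX hY
  rw [hR, hR, map_smul, map_smul, h.symm _ Y, h.symm _ X, hX _ (h.prk_mem _), hY _ (h.prk_mem _)]

/-- The distinguished harmonic form, `y = z - Σ z_i/c_i`: here `S = 1 - B R`, so on `p` the form
`g((SX)_k, RY) = -B g((RX)_k, RY)` is symmetric. -/
lemma crit_base (h : AlignedMetric K π k c z g prk prp) :
    Crit π k z g prk (fun i => z i - ∑ l, z l / c l) := by
  set B := ∑ l, z l / c l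
  have hS : ∀ X, diagOp π (fun i => (z i - B) / z i) X
      = X - B • diagOp π (fun i => 1 / z i) X := fun X => by
    conv_rhs => enter [1]; rw [← h.split.sum X]
    rw [diagOp_apply, diagOp_apply, Finset.smul_sum, ← Finset.sum_sub_distrib]
    refine Finset.sum_congr rfl fun i _ => ?_
    rw [smul_smul, sub_div, div_self (h.zpos i).ne', sub_smul, one_smul, mul_one_div]
  intro X Y hX hY
  simp only [hS, map_sub, map_smul, h.prk_p hX, h.prk_p hY, zero_sub, map_neg,
    LinearMap.neg_apply, LinearMap.smul_apply]
  rw [h.g_prk_symm]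

/-- Evaluating the criterion on vectors `diag(x) Z`, `diag(x') Z` of `p` with `0 ≠ Z ∈ k`
determines `y` up to scaling. -/
lemma crit_unique (h : AlignedMetric K π k c z g prk prp) (hk : k ≠ ⊥)
    (hne : ¬ ∀ i i', z i = z i') (y : ι → ℝ) (hy : ∑ i, y i / c i = 0)
    (hc : Crit π k z g prk y) : ∃ r : ℝ, ∀ i, y i = r * (z i - ∑ l, z l / c l) := by
  obtain ⟨Z, hZ, hZ0⟩ : ∃ Z ∈ k, Z ≠ 0 := by
    by_contra! h0
    exact hk (by rw [eq_bot_iff]; exact fun W hW => (LieSubalgebra.mem_bot _).2 (h0 W hW))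
  refine coeff_unique c z y h.cpos h.csum h.zpos hy hne fun x x' hx hx' => ?_
  have hB := h.B_pos.ne'
  have hgZ := (h.pos Z hZ0).ne'
  have key : ∀ x x' : ι → ℝ,
      g (prk (diagOp π (fun i => y i / z i) (diagOp π x Z)))
        (diagOp π (fun i => 1 / z i) (diagOp π x' Z))
      = (∑ i, y i * x i / c i) / (∑ i, z i / c i)
        * ((∑ i, x' i / c i) / (∑ i, z i / c i) * g Z Z) := fun x x' => by
    have e1 : ∑ i, z i * (y i / z i * x i) / c i = ∑ i, y i * x i / c i :=
      Finset.sum_congr rfl fun i _ => by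
        have := (h.zpos i).ne'
        field_simp
    have e2 : ∑ i, z i * (1 / z i * x' i) / c i = ∑ i, x' i / c i :=
      Finset.sum_congr rfl fun i _ => by
        have := (h.zpos i).ne'
        field_simp
    rw [h.split.diagOp_diagOp, h.split.diagOp_diagOp, h.prk_diagOp _ hZ, LinearMap.map_smul₂,
      smul_eq_mul, h.symm Z, h.diagOp_k _ hZ hZ, e1, e2]
  have := hc _ _ (h.diagOp_orth x hx hZ) (h.diagOp_orth x' hx' hZ)
  rw [key, key] at this
  field_simp at this
  linarith

/-- With at least three ideals, not all `y` with `Σ y_i/c_i = 0` are multiples of one vector,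
so if all of them satisfy the criterion then `z` is constant. -/
lemma const_of_crit (h : AlignedMetric K π k c z g prk prp) (hk : k ≠ ⊥)
    {i₀ i₁ i₂ : ι} (h01 : i₀ ≠ i₁) (h02 : i₀ ≠ i₂) (h12 : i₁ ≠ i₂)
    (hall : ∀ y : ι → ℝ, ∑ i, y i / c i = 0 → Crit π k z g prk y) : ∀ i i', z i = z i' := by
  classical
  by_contra hne
  have key : ∀ j, i₀ ≠ j → ∃ r : ℝ, ∀ i,
      (Pi.single i₀ (c i₀) - Pi.single j (c j) : ι → ℝ) i = r * (z i - ∑ l, z l / c l) := by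
    intro j hj
    have hy : ∑ i, (Pi.single i₀ (c i₀) - Pi.single j (c j) : ι → ℝ) i / c i = 0 := by
      simp [Pi.single_apply, sub_div, Finset.sum_sub_distrib, ite_div, (h.cpos _).ne']
    exact h.crit_unique hk hne _ hy (hall _ hy)
  obtain ⟨r, hr⟩ := key i₁ h01
  obtain ⟨r', hr'⟩ := key i₂ h02
  have a0 := hr i₀
  have a1 := hr i₁
  have b0 := hr' i₀
  have b1 := hr' i₁
  simp [h01, h01.symm, h02, h12] at a0 a1 b0 b1
  have p0 := (h.cpos i₀).ne'
  have p1 := (h.cpos i₁).ne'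
  rcases b1 with b1 | b1
  · rw [b1] at b0
    exact p0 (by simpa using b0)
  · rw [b1] at a1
    exact p1 (by simpa using a1)

end AlignedMetric

/-- Aligned setup (`s = m + 1`), Assumption (⋆), and `g = g_b`
(all `x_i = 1`).  Then: (i) if `s ≥ 3`, every closed 3-form `H_Q`
(`Q = Σ y_i κ_{g_i}`, `Σ y_i/c_i = 0`) is `g_b`-harmonic iff `z_1 = … = z_s`, i.e. iff
`g_b` is a positive multiple of the standard metric `-κ_g`; (ii) if the `z_i` are not
all equal, then up to scaling there is exactly one nonzero `g_b`-harmonic `H_Q`. -/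
theorem stmt_18
    {L : Type} [LieRing L] [LieAlgebra ℝ L] [FiniteDimensional ℝ L]
    (hκneg : ∀ X : L, X ≠ 0 → killingForm ℝ L X X < 0)
    {m : ℕ}
    (K : Fin (m + 1) → LieSubalgebra ℝ L)
    (hKideal : ∀ (i : Fin (m + 1)) (X Y : L), Y ∈ K i → ⁅X, Y⁆ ∈ K i)
    (hKsimple : ∀ i, LieAlgebra.IsSimple ℝ ↥(K i))
    (π : Fin (m + 1) → (L →ₗ[ℝ] L))
    (hπmem : ∀ i X, π i X ∈ K i)
    (hπsum : ∀ X : L, ∑ i, π i X = X)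
    (hπid : ∀ i X, X ∈ K i → π i X = X)
    (hπzero : ∀ i j, i ≠ j → ∀ X, X ∈ K i → π j X = 0)
    (k : LieSubalgebra ℝ L) (hk : k ≠ ⊥)
    (k₀ : LieSubalgebra ℝ L)
    (hk₀ : ∀ W : L, W ∈ k₀ ↔ (W ∈ k ∧ ∀ Z ∈ k, ⁅Z, W⁆ = 0))
    {t : ℕ} (kj : Fin t → LieSubalgebra ℝ L)
    (hkjsub : ∀ j, (kj j : Set L) ⊆ (k : Set L))
    (hkjideal : ∀ (j : Fin t) (Z W : L), Z ∈ k → W ∈ kj j → ⁅Z, W⁆ ∈ kj j)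
    (hkjsimple : ∀ j, LieAlgebra.IsSimple ℝ ↥(kj j))
    (hkdecomp : ∀ Z ∈ k, ∃ (Z₀ : L) (f : Fin t → L),
      Z₀ ∈ k₀ ∧ (∀ j, f j ∈ kj j) ∧ Z = Z₀ + ∑ j, f j)
    -- the aligned conditions
    (c : Fin (m + 1) → ℝ) (hcpos : ∀ i, 0 < c i)
    (lam : Fin t → ℝ) (hlam : ∀ j, 0 < lam j)
    (P : Fin (m + 1) → Fin t → LieSubalgebra ℝ L)
    (hPset : ∀ i j, (P i j : Set L) = (π i) '' (kj j : Set L))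
    (hPK : ∀ i j (U : L), U ∈ P i j → U ∈ K i)
    (hPne : ∀ i j, P i j ≠ ⊥)
    (hkilling : ∀ i j (U V : ↥(P i j)),
      killingForm ℝ ↥(P i j) U V
        = (lam j * c i) * killingForm ℝ ↥(K i) ⟨(U : L), hPK i j U U.2⟩ ⟨(V : L), hPK i j V V.2⟩)
    (ip0 : LinearMap.BilinForm ℝ L)
    (hip0symm : ∀ Z W : L, ip0 Z W = ip0 W Z)
    (hip0pos : ∀ Z ∈ k₀, Z ≠ 0 → 0 < ip0 Z Z)
    (hip0 : ∀ (i : Fin (m + 1)), ∀ Z ∈ k₀, ∀ W ∈ k₀,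
      killingForm ℝ ↥(K i) ⟨π i Z, hπmem i Z⟩ ⟨π i W, hπmem i W⟩ = -(1 / c i) * ip0 Z W)
    (hcsum : ∑ i, 1 / c i = 1)
    -- the bi-invariant metric g_b, the constants A_{s+j}, and the maps φ_j
    (z : Fin (m + 1) → ℝ) (hz : ∀ i, 0 < z i)
    (gb : LinearMap.BilinForm ℝ L)
    (hgb : ∀ X Y : L, gb X Y
      = - ∑ i, z i * killingForm ℝ ↥(K i) ⟨π i X, hπmem i X⟩ ⟨π i Y, hπmem i Y⟩)
    (A : Fin m → ℝ)
    (hA : ∀ j : Fin m, A j = -(c j.succ / z j.succ)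
      * ∑ l : Fin (m + 1), (if (l : ℕ) ≤ (j : ℕ) then z l / c l else 0))
    (φ : Fin m → (L →ₗ[ℝ] L))
    (hφ : ∀ (j : Fin m) (Z : L), φ j Z
      = (∑ l : Fin (m + 1), (if (l : ℕ) ≤ (j : ℕ) then π l Z else 0)) + A j • π j.succ Z)
    -- the pieces p_1, …, p_s and p_{s+1} = φ_1(k), …, p_{2s-1} = φ_{s-1}(k)
    (Pp : Fin (m + 1) → Submodule ℝ L)
    (hPp : ∀ (i : Fin (m + 1)) (X : L), X ∈ Pp i ↔
      ∃ hX : X ∈ K i, ∀ Z ∈ k,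
        killingForm ℝ ↥(K i) ⟨X, hX⟩ ⟨π i Z, hπmem i Z⟩ = 0)
    (Pt : Fin m → Submodule ℝ L)
    (hPt : ∀ (j : Fin m) (X : L), X ∈ Pt j ↔ ∃ Z ∈ k, φ j Z = X)
    -- the projections onto k and its g_b-orthogonal complement p
    (prk prp : L →ₗ[ℝ] L)
    (hprk : ∀ X : L, prk X ∈ k)
    (hprp : ∀ (X : L), ∀ Z ∈ k, gb (prp X) Z = 0)
    (hprsum : ∀ X : L, prk X + prp X = X)
    (hprkk : ∀ Z ∈ k, prk Z = Z)
    -- an adapted g_b-orthonormal basis Eb of p (here g = g_b, all weights equal to 1)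
    {n : ℕ} (Eb : Fin n → L) (idx : Fin n → (Fin (m + 1)) ⊕ (Fin m))
    (hEmem : ∀ u : Fin n,
      Sum.elim (fun i => Eb u ∈ Pp i) (fun j => Eb u ∈ Pt j) (idx u))
    (hEon : ∀ u v : Fin n, gb (Eb u) (Eb v) = if u = v then 1 else 0)
    (hEspan : ∀ X : L, (∀ Z ∈ k, gb X Z = 0) → X ∈ Submodule.span ℝ (Set.range Eb))
    -- Assumption (⋆)
    (hstar : ∀ ω : LinearMap.BilinForm ℝ L,
      (∀ X : L, ω X X = 0) →
      (∀ Z ∈ k, ∀ X Y : L, (∀ W ∈ k, gb X W = 0) → (∀ W ∈ k, gb Y W = 0) →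
        ω ⁅Z, X⁆ Y + ω X ⁅Z, Y⁆ = 0) →
      ∀ X Y : L,
        (∃ f : Fin (m + 1) → L, (∀ i, f i ∈ Pp i) ∧ X = ∑ i, f i) →
        (∃ g : Fin m → L, (∀ j, g j ∈ Pt j) ∧ Y = ∑ j, g j) →
        ω X Y = 0) :
    -- (i) for s ≥ 3 : all H_Q harmonic ↔ z₁ = … = z_s
    ((2 ≤ m →
      ((∀ y : Fin (m + 1) → ℝ, (∑ i, y i / c i = 0) →
          IsHarmonicHQ K π hπmem k gb prk prp Eb (fun _ => 1) y)
        ↔ (∀ i i' : Fin (m + 1), z i = z i')))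
    ∧ (2 ≤ m →
      ((∀ y : Fin (m + 1) → ℝ, (∑ i, y i / c i = 0) →
          IsHarmonicHQ K π hπmem k gb prk prp Eb (fun _ => 1) y)
        ↔ (∃ r : ℝ, 0 < r ∧ ∀ X Y : L, gb X Y = r * (-(killingForm ℝ L X Y))))))
    ∧
    -- (ii) if the z_i are not all equal, the harmonic H_Q's form a 1-dimensional space
    ((¬ ∀ i i' : Fin (m + 1), z i = z i') →
      ∃ y₀ : Fin (m + 1) → ℝ, y₀ ≠ 0 ∧ (∑ i, y₀ i / c i = 0)
        ∧ IsHarmonicHQ K π hπmem k gb prk prp Eb (fun _ => 1) y₀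
        ∧ ∀ y : Fin (m + 1) → ℝ, (∑ i, y i / c i = 0) →
            IsHarmonicHQ K π hπmem k gb prk prp Eb (fun _ => 1) y →
            ∃ r : ℝ, y = r • y₀) := by
  have hI : IdealSplitting K π := ⟨hKideal, hπmem, hπsum, hπid, hπzero⟩
  have h : AlignedMetric K π k c z gb prk prp :=
    { split := hI
      neg := hκneg
      cpos := hcpos
      csum := hcsum
      zpos := hz
      aligned := fun i i' Z hZ W hW => hI.aligned k k₀ hk₀ kj hkjideal hkjsimple hkdecomp c hcpos
        lam hlam P hPset hPK hPne hkilling ip0 hip0 i i' hZ hW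
      metric := fun X Y => by rw [hgb, hI.sum_killing]
      prk_mem := hprk
      prp_orth := hprp
      pr_sum := hprsum }
  -- the adapted basis is orthogonal to `k`
  have hEp : ∀ u, ∀ Z ∈ k, gb (Eb u) Z = 0 := by
    intro u Z hZ
    have hu := hEmem u
    rcases hidx : idx u with i | j
    · rw [hidx] at hu
      obtain ⟨hX, hκ⟩ := (hPp i (Eb u)).1 hu
      have h1 := hκ Z hZ
      rw [killing_of_ideal (K i) (hKideal i)] at h1
      have h2 : diagOp π z (Eb u) = z i • Eb u := by
        rw [diagOp_apply, Finset.sum_eq_single i]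
        · rw [hπid i _ hX]
        · intro l _ hl
          rw [hπzero i l hl.symm _ hX, smul_zero]
        · simp
      rw [h.metric, h2, LinearMap.map_smul₂]
      have h3 := hI.killing_pi_symm i (Eb u) Z
      rw [hπid i _ hX] at h3
      rw [h3]
      simp only at h1
      rw [h1, smul_zero, neg_zero]
    · rw [hidx] at hu
      obtain ⟨V, hV, hVE⟩ := (hPt j (Eb u)).1 hu
      let x : Fin (m + 1) → ℝ := fun l =>
        (if (l : ℕ) ≤ (j : ℕ) then 1 else 0) + (if l = j.succ then A j else 0)
      have h1 : diagOp π x V = Eb u := by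
        rw [← hVE, hφ, diagOp_apply]
        simp only [x, add_smul, ite_smul, one_smul, zero_smul, Finset.sum_add_distrib]
        simp
      have h2 : ∑ l, z l * x l / c l = 0 := by
        have h3 : ∀ l, z l * x l / c l = (if (l : ℕ) ≤ (j : ℕ) then z l / c l else 0)
            + (if l = j.succ then z l * A j / c l else 0) := fun l => by
          simp only [x]
          split_ifs <;> ring
        simp only [h3, Finset.sum_add_distrib]
        rw [Finset.sum_ite_eq' Finset.univ j.succ, if_pos (Finset.mem_univ _), hA]
        have := (hz j.succ).ne'
        have := (hcpos j.succ).ne'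
        field_simp
        ring
      rw [← h1]
      exact h.diagOp_orth x h2 hV Z hZ
  have hcrit : ∀ y : Fin (m + 1) → ℝ, ∑ i, y i / c i = 0 →
      (IsHarmonicHQ K π hπmem k gb prk prp Eb (fun _ => 1) y
        ↔ AlignedMetric.Crit π k z gb prk y) := by
    intro y hy
    have hQ : ∀ X Y, QyForm K π hπmem y X Y = - gb (diagOp π (fun i => y i / z i) X) Y :=
      fun X Y => by rw [← h.killing_eq]; exact hI.sum_killing y X Y
    have hH : ∀ X Y Z, HQform K π hπmem prk y X Y Z
        = HS gb prk (diagOp π (fun i => y i / z i)) X Y Z := fun X Y Z => by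
      rw [HQform, HS, hQ, hQ, hQ, hQ]
      ring
    unfold AlignedMetric.Crit
    rw [← (h.biinv hEp hEon hEspan y hy).harmonic_iff]
    unfold IsHarmonicHQ
    simp only [hH, mul_one, div_one]
  have hi : 2 ≤ m →
      ((∀ y : Fin (m + 1) → ℝ, (∑ i, y i / c i = 0) →
          IsHarmonicHQ K π hπmem k gb prk prp Eb (fun _ => 1) y)
        ↔ (∀ i i' : Fin (m + 1), z i = z i')) := by
    intro hm
    constructor
    · intro hall
      refine h.const_of_crit hk (i₀ := ⟨0, by omega⟩) (i₁ := ⟨1, by omega⟩) (i₂ := ⟨2, by omega⟩)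
        (by simp) (by simp) (by simp) fun y hy => (hcrit y hy).1 (hall y hy)
    · exact fun hconst y hy => (hcrit y hy).2 (h.crit_of_const hconst y)
  have hii : (∀ i i' : Fin (m + 1), z i = z i') ↔
      (∃ r : ℝ, 0 < r ∧ ∀ X Y : L, gb X Y = r * (-(killingForm ℝ L X Y))) := by
    constructor
    · intro hconst
      refine ⟨z 0, hz 0, fun X Y => ?_⟩
      have h1 : diagOp π z X = z 0 • X := by
        conv_rhs => rw [← hπsum X]
        rw [diagOp_apply, Finset.smul_sum]
        exact Finset.sum_congr rfl fun i _ => by rw [hconst i 0]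
      rw [h.metric, h1, LinearMap.map_smul₂, smul_eq_mul, mul_neg]
    · rintro ⟨r, -, hr⟩
      have hzr : ∀ i, z i = r := by
        intro i
        -- a simple ideal is nonzero, being nonabelian
        obtain ⟨X, hX, hX0⟩ : ∃ X ∈ K i, X ≠ 0 := by
          by_contra! h0
          refine (hKsimple i).non_abelian ⟨fun U V => Subtype.ext ?_⟩
          rw [h0 _ (⁅U, V⁆ : K i).2]
          rfl
        have h2 : diagOp π z X = z i • X := by
          rw [diagOp_apply, Finset.sum_eq_single i]
          · rw [hπid i _ hX]
          · intro l _ hl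
            rw [hπzero i l hl.symm _ hX, smul_zero]
          · simp
        have h3 := hr X X
        rw [h.metric, h2, LinearMap.map_smul₂, smul_eq_mul, ← mul_neg] at h3
        exact mul_right_cancel₀ (neg_ne_zero.2 (hκneg X hX0).ne) h3
      intro i i'
      rw [hzr, hzr]
  refine ⟨⟨hi, fun hm => (hi hm).trans hii⟩, fun hne => ?_⟩
  have hy₀ : ∑ i, (z i - ∑ l, z l / c l) / c i = 0 := by
    have : ∀ i, (z i - ∑ l, z l / c l) / c i = z i / c i - (∑ l, z l / c l) * (1 / c i) :=
      fun i => by ring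
    simp only [this, Finset.sum_sub_distrib, ← Finset.mul_sum, hcsum, mul_one, sub_self]
  refine ⟨fun i => z i - ∑ l, z l / c l, fun h0 => hne fun i i' => ?_, hy₀,
    (hcrit _ hy₀).2 h.crit_base, fun y hy hharm => ?_⟩
  · have e := congrFun h0 i
    have e' := congrFun h0 i'
    simp only [Pi.zero_apply] at e e'
    linarith
  · obtain ⟨r, hr⟩ := h.crit_unique hk hne y hy ((hcrit y hy).1 hharm)
    exact ⟨r, funext hr⟩
end
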